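/- arXiv:math/0607084 — 2 statements merged into one kernel-verified Lean document; each statement's English description precedes it below -/
import Mathlib

section
/- Let n ≥ 2 and let P ⊂ ℝⁿ be an n-dimensional integer convex polyhedron with 0 ∉ P. Let v be a vertex of P lying in the topological interior of conv(P ∪ {0}), suppose v is contained in exactly m edges of P, with primitive integer direction vectors r₁,…,r_m, and let F be an (n−1)-dimensional face of P with v ∈ F. Assume that ℤⁿ ∩ conv(P ∪ {0}) \ P = {0}, i.e., the only integer point of conv(P ∪ {0}) not belonging to P is the origin. Then the subgroup of ℤⁿ generated by ℤⁿ ∩ aff(F) has finite index ρ(F,0) in ℤⁿ, and ρ(F,0) < (nm)^{4·n!} · det oSt_v. -/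
open Set Function

noncomputable section

/-- Points of `ℝⁿ`. -/
abbrev Vec (n : ℕ) := Fin n → ℝ

/-- A point of `ℝⁿ` with all coordinates integer, i.e. a point of `ℤⁿ`. -/
def IsIntVec {n : ℕ} (x : Vec n) : Prop := ∀ i, ∃ m : ℤ, x i = (m : ℝ)

/-- The canonical embedding of `ℤⁿ` into `ℝⁿ`. -/
def intCast {n : ℕ} (y : Fin n → ℤ) : Vec n := fun i => (y i : ℝ)

/-- The standard inner product on `ℝⁿ`. -/
def dot {n : ℕ} (x y : Vec n) : ℝ := ∑ i, x i * y i

/-- An integer vector is primitive if the gcd of its coordinates is `1`, i.e. every common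
divisor of the coordinates is a unit. -/
def IsPrimitiveVec {n : ℕ} (r : Fin n → ℤ) : Prop :=
  ∀ d : ℤ, (∀ i, d ∣ r i) → IsUnit d

/-- `E` is a face of `K` of dimension `d`: a convex extreme subset of `K`
whose affine hull has dimension `d`. -/
def IsFaceDim {n : ℕ} (K E : Set (Vec n)) (d : ℕ) : Prop :=
  IsExtreme ℝ K E ∧ Convex ℝ E ∧ Module.finrank ℝ (affineSpan ℝ E).direction = d

/-- The vertex `v` of `P` is contained in exactly the `m` (pairwise distinct) edges
`E 0, …, E (m-1)` of `P`, and `r j` is the primitive integer direction vector of `E j`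
emanating from `v`. -/
def HasEdgeData {n m : ℕ} (P : Set (Vec n)) (v : Vec n)
    (E : Fin m → Set (Vec n)) (r : Fin m → (Fin n → ℤ)) : Prop :=
  Function.Injective E ∧
  (∀ j, IsFaceDim P (E j) 1 ∧ v ∈ E j ∧ IsPrimitiveVec (r j) ∧
    E j ⊆ {x | ∃ t : ℝ, 0 ≤ t ∧ x = v + t • intCast (r j)}) ∧
  (∀ F, IsFaceDim P F 1 → v ∈ F → ∃ j, F = E j)

open Classical in
/-- The determinant of the edge star of a vertex with primitive edge direction vectors
`r 0, …, r (m-1)`:  `∑_{1 ≤ i₁ < … < iₙ ≤ m} |det (r i₁, …, r iₙ)|`. -/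
def starDet {n m : ℕ} (r : Fin m → (Fin n → ℤ)) : ℤ :=
  ∑ g ∈ Finset.univ.filter (fun g : Fin n → Fin m => StrictMono g),
    |(Matrix.of fun i j => r (g i) j).det|

/-- Simultaneous Dirichlet approximation via pigeonhole. -/
lemma dirichlet_aux {ι : Type*} [Fintype ι] [DecidableEq ι] (J : Finset ι) (b : ι → ℝ)
    (hpos : ∀ i ∈ J, 0 < b i) (hle : ∀ i ∈ J, b i ≤ 1) :
    ∃ (Q : ℕ) (z : ι → ℤ), 1 ≤ Q ∧ (Q : ℝ) ≤ ∏ i ∈ J, (3 / b i) ∧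
      (∀ i ∈ J, |(Q : ℝ) * b i - z i| ≤ b i / 2) ∧ ∀ i, i ∉ J → z i = 0 := by
  set N : ι → ℕ := fun i => if i ∈ J then ⌈2 / b i⌉₊ else 1 with hN
  have hNpos : ∀ i, 0 < N i := by
    intro i
    by_cases hi : i ∈ J
    · simp only [hN, hi, if_true]
      exact Nat.ceil_pos.mpr (div_pos two_pos (hpos i hi))
    · simp [hN, hi]
  set T : Finset (ι → ℕ) := Fintype.piFinset (fun i => Finset.range (N i)) with hT
  have hTcard : T.card = ∏ i, N i := by simp [hT, Fintype.card_piFinset]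
  set φ : ℕ → ι → ℕ := fun q i => ⌊(N i : ℝ) * Int.fract ((q : ℝ) * b i)⌋₊ with hφ
  have hmaps : ∀ q ∈ Finset.range (T.card + 1), φ q ∈ T := by
    intro q _
    rw [hT, Fintype.mem_piFinset]
    intro i
    rw [Finset.mem_range, hφ]
    have h1 : (0 : ℝ) < N i := by exact_mod_cast hNpos i
    rw [Nat.floor_lt (mul_nonneg h1.le (Int.fract_nonneg _))]
    nlinarith [Int.fract_lt_one ((q : ℝ) * b i)]
  obtain ⟨q, hq, q', hq', hne, heq⟩ :=
    Finset.exists_ne_map_eq_of_card_lt_of_maps_to (by simp) hmaps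
  wlog hlt : q < q' generalizing q q'
  · exact this q' hq' q hq hne.symm heq.symm (lt_of_le_of_ne (not_lt.mp hlt) hne.symm)
  refine ⟨q' - q, fun i => if i ∈ J then ⌊(q' : ℝ) * b i⌋ - ⌊(q : ℝ) * b i⌋ else 0,
    by omega, ?_, ?_, ?_⟩
  · have h1 : q' - q ≤ ∏ i, N i := by
      have := Finset.mem_range.mp hq'
      omega
    have h2 : ∏ i, N i = ∏ i ∈ J, ⌈2 / b i⌉₊ := by
      simp only [hN]
      rw [Finset.prod_ite_mem, Finset.univ_inter]
    have h3 : ((q' - q : ℕ) : ℝ) ≤ ((∏ i ∈ J, ⌈2 / b i⌉₊ : ℕ) : ℝ) := by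
      exact_mod_cast h2 ▸ h1
    refine h3.trans ?_
    push_cast
    apply Finset.prod_le_prod
    · intro i _; positivity
    · intro i hi
      have hb := hpos i hi
      have := Nat.ceil_lt_add_one (div_pos two_pos hb).le
      have h4 : 1 ≤ 1 / b i := by rw [le_div_iff₀ hb]; linarith [hle i hi]
      have : (3 : ℝ) / b i = 2 / b i + 1 / b i := by ring
      linarith
  · intro i hi
    simp only [hi, if_true]
    have hb := hpos i hi
    have hNi : (2 / b i : ℝ) ≤ N i := by
      simp only [hN, hi, if_true]; exact Nat.le_ceil _
    have hNi0 : (0 : ℝ) < N i := by exact_mod_cast hNpos i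
    have h1 := congrFun heq i
    simp only [hφ] at h1
    have f1 := Int.fract_nonneg ((q : ℝ) * b i)
    have f2 := Int.fract_nonneg ((q' : ℝ) * b i)
    have l1 := Nat.floor_le (mul_nonneg hNi0.le f1)
    have l2 := Nat.floor_le (mul_nonneg hNi0.le f2)
    have u1 := Nat.lt_floor_add_one ((N i : ℝ) * Int.fract ((q : ℝ) * b i))
    have u2 := Nat.lt_floor_add_one ((N i : ℝ) * Int.fract ((q' : ℝ) * b i))
    rw [h1] at l1 u1
    have key : |(N i : ℝ) * (Int.fract ((q' : ℝ) * b i) - Int.fract ((q : ℝ) * b i))| ≤ 1 := by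
      rw [abs_le]; constructor <;> nlinarith
    rw [abs_mul, abs_of_pos hNi0] at key
    have e : ((q' - q : ℕ) : ℝ) * b i - ((⌊(q' : ℝ) * b i⌋ - ⌊(q : ℝ) * b i⌋ : ℤ) : ℝ) =
        Int.fract ((q' : ℝ) * b i) - Int.fract ((q : ℝ) * b i) := by
      rw [Nat.cast_sub hlt.le]
      simp only [Int.fract]
      push_cast
      ring
    rw [e]
    have h5 : 2 / b i * |Int.fract ((q' : ℝ) * b i) - Int.fract ((q : ℝ) * b i)| ≤ 1 :=
      le_trans (mul_le_mul_of_nonneg_right hNi (abs_nonneg _)) key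
    rw [div_mul_eq_mul_div, div_le_one hb] at h5
    linarith
  · intro i hi
    simp [hi]

/-- Given a good set `J`, double the weight at the origin. -/
lemma double_aux {ι : Type*} [Fintype ι] [DecidableEq ι] (J : Finset ι) (b : ι → ℝ)
    (hnn : ∀ i, 0 ≤ b i) (hJ : ∀ i ∈ J, 0 < b i) (hs : 0 < ∑ i, b i) (hs1 : ∑ i, b i < 1)
    (hgood : (∏ i ∈ J, (3 / b i)) * ((∑ i ∈ Jᶜ, b i) + (1 - ∑ i, b i)) ≤ 1 / 2) :
    ∃ (Q : ℤ) (z : ι → ℤ), (∀ i, 0 ≤ (Q : ℝ) * b i - z i) ∧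
      0 < ∑ i, ((Q : ℝ) * b i - z i) ∧
      2 * (1 - ∑ i, b i) ≤ 1 - ∑ i, ((Q : ℝ) * b i - z i) := by
  have hle : ∀ i, b i ≤ 1 := fun i =>
    (Finset.single_le_sum (fun j _ => hnn j) (Finset.mem_univ i)).trans hs1.le
  obtain ⟨Q, z, hQ1, hQ, hz, hz0⟩ := dirichlet_aux J b hJ (fun i _ => hle i)
  set s := ∑ i, b i with hsdef
  have hQ1' : (1 : ℝ) ≤ Q := by exact_mod_cast hQ1
  have hsplit : s = ∑ i ∈ J, b i + ∑ i ∈ Jᶜ, b i := by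
    rw [hsdef, ← Finset.sum_add_sum_compl J]
  have htail0 : 0 ≤ ∑ i ∈ Jᶜ, b i := Finset.sum_nonneg (fun i _ => hnn i)
  have htail : (Q : ℝ) * ((∑ i ∈ Jᶜ, b i) + (1 - s)) ≤ 1 / 2 :=
    le_trans (mul_le_mul_of_nonneg_right hQ (by linarith)) hgood
  -- the deviation
  have hS : ∑ i, ((Q : ℝ) * b i - z i) = Q * s - ((∑ i, z i : ℤ) : ℝ) := by
    push_cast
    rw [Finset.sum_sub_distrib, ← Finset.mul_sum]
  have hS2 : ∑ i, ((Q : ℝ) * b i - z i) =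
      ∑ i ∈ J, ((Q : ℝ) * b i - z i) + Q * ∑ i ∈ Jᶜ, b i := by
    rw [← Finset.sum_add_sum_compl J, Finset.mul_sum]
    congr 1
    apply Finset.sum_congr rfl
    intro i hi
    rw [hz0 i (Finset.mem_compl.mp hi)]
    simp
  have hSJ : |∑ i ∈ J, ((Q : ℝ) * b i - z i)| ≤ (∑ i ∈ J, b i) / 2 := by
    refine (Finset.abs_sum_le_sum_abs _ _).trans ?_
    rw [Finset.sum_div]
    exact Finset.sum_le_sum hz
  have hSJ' := abs_le.mp hSJ
  have hint : (Q : ℤ) - ∑ i, z i = 0 := by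
    have e : (((Q : ℤ) - ∑ i, z i : ℤ) : ℝ) =
        ∑ i ∈ J, ((Q : ℝ) * b i - z i) + Q * ((∑ i ∈ Jᶜ, b i) + (1 - s)) := by
      have := hS.symm.trans hS2
      push_cast at this ⊢
      linarith
    have p0 : 0 ≤ (Q : ℝ) * ((∑ i ∈ Jᶜ, b i) + (1 - s)) := by
      apply mul_nonneg <;> linarith
    have h1 : (((Q : ℤ) - ∑ i, z i : ℤ) : ℝ) < 1 := by rw [e]; linarith
    have h2 : (-1 : ℝ) < (((Q : ℤ) - ∑ i, z i : ℤ) : ℝ) := by rw [e]; linarith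
    have h1' : (Q : ℤ) - ∑ i, z i < 1 := by exact_mod_cast h1
    have h2' : -1 < (Q : ℤ) - ∑ i, z i := by exact_mod_cast h2
    omega
  have hzs : ((∑ i, z i : ℤ) : ℝ) = Q := by
    have : ∑ i, z i = (Q : ℤ) := by omega
    rw [this]; simp
  have hnew : ∑ i, ((((Q : ℤ) + 1 : ℤ) : ℝ) * b i - z i) = s + Q * s - Q := by
    have : ∀ i, (((Q : ℤ) + 1 : ℤ) : ℝ) * b i - z i = b i + ((Q : ℝ) * b i - z i) := by
      intro i; push_cast; ring
    rw [Finset.sum_congr rfl (fun i _ => this i), Finset.sum_add_distrib, hS, hzs]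
    ring
  refine ⟨(Q : ℤ) + 1, z, ?_, ?_, ?_⟩
  · intro i
    by_cases hi : i ∈ J
    · have := (abs_le.mp (hz i hi)).1
      have := hnn i
      push_cast
      linarith
    · rw [hz0 i hi]
      have := hnn i
      push_cast
      nlinarith
  · rw [hnew]
    have : (Q : ℝ) * (1 - s) ≤ 1 / 2 := by nlinarith
    have h2 : (0:ℝ) ≤ Q * ∑ i ∈ Jᶜ, b i := by positivity
    have := hS.symm.trans hS2
    rw [hzs] at this
    nlinarith
  · rw [hnew]
    nlinarith

/-- The recursive bound for inverse products. -/
def PB (n : ℕ) : ℕ → ℕ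
  | 0 => 1
  | (j + 1) => PB n j * (PB n j * (2 * 3 ^ j * (n + 1 - j)))

def DB (n j : ℕ) : ℕ := PB n j * (2 * 3 ^ j * (n + 1 - j))

lemma PB_pos (n j : ℕ) (hj : j ≤ n + 1) : 0 < PB n j := by
  induction j with
  | zero => simp [PB]
  | succ j ih =>
    have h1 := ih (by omega)
    have : 0 < n + 1 - j := by omega
    simp only [PB]
    positivity

lemma good_exists {ι : Type*} [Fintype ι] [DecidableEq ι] (n : ℕ) (hn : Fintype.card ι ≤ n)
    (b : ι → ℝ) (hnn : ∀ i, 0 ≤ b i) (hs1 : ∑ i, b i < 1) (B : ℝ)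
    (hB : ∀ j ≤ n, (DB n j : ℝ) ≤ B) (hb0 : (1 - ∑ i, b i) * B < 1) :
    ∃ J : Finset ι, (∀ i ∈ J, 0 < b i) ∧
      (∏ i ∈ J, (3 / b i)) * ((∑ i ∈ Jᶜ, b i) + (1 - ∑ i, b i)) ≤ 1 / 2 := by
  by_contra hcon
  push Not at hcon
  have main : ∀ j ≤ Fintype.card ι + 1, ∃ J : Finset ι, J.card = j ∧ (∀ i ∈ J, 0 < b i) ∧
      ∏ i ∈ J, (1 / b i) ≤ PB n j := by
    intro j
    induction j with
    | zero => intro _; exact ⟨∅, by simp [PB]⟩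
    | succ j ih =>
      intro hj
      obtain ⟨J, hJc, hJp, hJ⟩ := ih (by omega)
      have hbad := hcon J hJp
      have hjn : j ≤ n := by omega
      have hD : (0 : ℝ) < DB n j := by
        have := PB_pos n j (by omega)
        have h2 : 0 < n + 1 - j := by omega
        unfold DB
        positivity
      have hP : (0 : ℝ) < PB n j := by exact_mod_cast PB_pos n j (by omega)
      have hex : ∃ i ∈ Jᶜ, 1 / (DB n j : ℝ) ≤ b i := by
        by_contra hno
        push Not at hno
        have h0 : 1 - ∑ i, b i ≤ 1 / (DB n j : ℝ) := by
          rw [le_div_iff₀ hD]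
          nlinarith [hB j hjn]
        have h1 : ∑ i ∈ Jᶜ, b i ≤ (Jᶜ.card : ℝ) * (1 / (DB n j : ℝ)) := by
          rw [← nsmul_eq_mul]
          exact Finset.sum_le_card_nsmul _ _ _ (fun i hi => (hno i hi).le)
        have hcard : (Jᶜ.card : ℝ) + 1 ≤ ((n + 1 - j : ℕ) : ℝ) := by
          rw [Finset.card_compl, hJc]
          have : Fintype.card ι - j + 1 ≤ n + 1 - j := by omega
          exact_mod_cast this
        have h2 : (∑ i ∈ Jᶜ, b i) + (1 - ∑ i, b i) ≤ ((n + 1 - j : ℕ) : ℝ) * (1 / (DB n j : ℝ)) := by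
          have : 0 ≤ 1 / (DB n j : ℝ) := by positivity
          nlinarith
        have h3 : ∏ i ∈ J, (3 / b i) ≤ 3 ^ j * (PB n j : ℝ) := by
          have : ∏ i ∈ J, (3 / b i) = 3 ^ j * ∏ i ∈ J, (1 / b i) := by
            rw [← hJc, ← Finset.prod_const, ← Finset.prod_mul_distrib]
            apply Finset.prod_congr rfl
            intro i _; ring
          rw [this]
          gcongr
        have h4 : (∏ i ∈ J, (3 / b i)) * ((∑ i ∈ Jᶜ, b i) + (1 - ∑ i, b i)) ≤
            (3 ^ j * (PB n j : ℝ)) * (((n + 1 - j : ℕ) : ℝ) * (1 / (DB n j : ℝ))) := by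
          apply mul_le_mul h3 h2
          · have : 0 ≤ ∑ i ∈ Jᶜ, b i := Finset.sum_nonneg (fun i _ => hnn i)
            linarith
          · positivity
        have h5 : (3 ^ j * (PB n j : ℝ)) * (((n + 1 - j : ℕ) : ℝ) * (1 / (DB n j : ℝ))) = 1 / 2 := by
          have e : (DB n j : ℝ) = PB n j * (2 * 3 ^ j * ((n + 1 - j : ℕ) : ℝ)) := by
            unfold DB; push_cast; ring
          have h6 : (0 : ℝ) < ((n + 1 - j : ℕ) : ℝ) := by
            have : 0 < n + 1 - j := by omega
            exact_mod_cast this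
          rw [e]
          field_simp
        linarith
      obtain ⟨i, hi, hbi⟩ := hex
      rw [Finset.mem_compl] at hi
      have hbi0 : 0 < b i := lt_of_lt_of_le (by positivity) hbi
      refine ⟨insert i J, by rw [Finset.card_insert_of_notMem hi, hJc], ?_, ?_⟩
      · intro k hk
        rcases Finset.mem_insert.mp hk with rfl | hk
        · exact hbi0
        · exact hJp k hk
      · rw [Finset.prod_insert hi]
        have h1 : 1 / b i ≤ DB n j := by
          rw [div_le_iff₀ hD] at hbi
          rw [div_le_iff₀ hbi0]
          linarith
        have e : (PB n (j + 1) : ℝ) = DB n j * PB n j := by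
          simp only [PB, DB]; push_cast; ring
        rw [e]
        apply mul_le_mul h1 hJ _ hD.le
        exact Finset.prod_nonneg (fun k hk => by have := hJp k hk; positivity)
  obtain ⟨J, hJ, _⟩ := main _ le_rfl
  have := J.card_le_univ
  omega

lemma diophantine {ι : Type*} [Fintype ι] [DecidableEq ι] (n : ℕ) (hn : Fintype.card ι ≤ n)
    (b : ι → ℝ) (hnn : ∀ i, 0 ≤ b i) (hs : 0 < ∑ i, b i) (hs1 : ∑ i, b i < 1) (B : ℝ)
    (hB : ∀ j ≤ n, (DB n j : ℝ) ≤ B) :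
    ∃ (Q : ℤ) (z : ι → ℤ), (∀ i, 0 ≤ (Q : ℝ) * b i - z i) ∧
      0 < ∑ i, ((Q : ℝ) * b i - z i) ∧ 1 ≤ (1 - ∑ i, ((Q : ℝ) * b i - z i)) * B := by
  set T : Set ℝ := {x | ∃ (Q : ℤ) (z : ι → ℤ), (∀ i, 0 ≤ (Q : ℝ) * b i - z i) ∧
      0 < ∑ i, ((Q : ℝ) * b i - z i) ∧ x = 1 - ∑ i, ((Q : ℝ) * b i - z i)} with hT
  have hmem : 1 - ∑ i, b i ∈ T := ⟨1, 0, by simpa using hnn, by simpa using hs, by simp⟩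
  have hbdd : BddAbove T := by
    refine ⟨1, ?_⟩
    rintro x ⟨Q, z, _, h, rfl⟩
    linarith
  have hsup : 1 - ∑ i, b i ≤ sSup T := le_csSup hbdd hmem
  obtain ⟨x, ⟨Q, z, hc, hc1, rfl⟩, hx⟩ :=
    exists_lt_of_lt_csSup ⟨_, hmem⟩ (show sSup T / 2 < sSup T by linarith)
  by_cases hfin : 1 ≤ (1 - ∑ i, ((Q : ℝ) * b i - z i)) * B
  · exact ⟨Q, z, hc, hc1, hfin⟩
  exfalso
  push Not at hfin
  have hlt : ∑ i, ((Q : ℝ) * b i - z i) < 1 := by linarith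
  obtain ⟨J, hJ, hgood⟩ := good_exists n hn _ hc hlt B hB hfin
  obtain ⟨Q', z', h1, h2, h3⟩ := double_aux J _ hc hJ hc1 hlt hgood
  have e : ∀ i, (Q' : ℝ) * ((Q : ℝ) * b i - z i) - z' i =
      ((Q' * Q : ℤ) : ℝ) * b i - ((Q' * z i + z' i : ℤ) : ℝ) := by
    intro i; push_cast; ring
  simp only [e] at h1 h2 h3
  have := le_csSup hbdd (show _ ∈ T from ⟨Q' * Q, fun i => Q' * z i + z' i, h1, h2, rfl⟩)
  linarith

lemma PB_le (n j : ℕ) (hn : 3 ≤ n) (hj : j ≤ n) :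
    PB n j ≤ (4 ^ n) ^ (2 ^ j - 1) ∧ DB n j ≤ (4 ^ n) ^ (2 ^ j) := by
  have hA : ∀ j ≤ n, 2 * 3 ^ j * (n + 1 - j) ≤ 4 ^ n := by
    intro j hj
    obtain ⟨k, rfl⟩ := Nat.exists_eq_add_of_le hj
    have h1 : j + k + 1 - j ≤ 3 ^ k := by
      have : k < 3 ^ k := Nat.lt_pow_self (by norm_num)
      omega
    have h2 : ∀ N, 3 ≤ N → 2 * 3 ^ N ≤ 4 ^ N := by
      intro N hN
      induction N, hN using Nat.le_induction with
      | base => norm_num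
      | succ N _ ih => rw [pow_succ, pow_succ]; omega
    calc 2 * 3 ^ j * (j + k + 1 - j) ≤ 2 * 3 ^ j * 3 ^ k := Nat.mul_le_mul_left _ h1
      _ = 2 * 3 ^ (j + k) := by ring
      _ ≤ _ := h2 _ hn
  have step : ∀ j ≤ n, PB n j ≤ (4 ^ n) ^ (2 ^ j - 1) → DB n j ≤ (4 ^ n) ^ (2 ^ j) := by
    intro j hj h
    have e : 2 ^ j = (2 ^ j - 1) + 1 := by have := Nat.one_le_two_pow (n := j); omega
    rw [e, pow_succ]
    exact Nat.mul_le_mul h (hA j hj)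
  have hP : PB n j ≤ (4 ^ n) ^ (2 ^ j - 1) := by
    induction j with
    | zero => simp [PB]
    | succ j ih =>
      have h1 := ih (by omega)
      have h2 := step j (by omega) h1
      have e : 2 ^ (j + 1) - 1 = (2 ^ j - 1) + 2 ^ j := by
        have := Nat.one_le_two_pow (n := j); rw [pow_succ]; omega
      rw [e, pow_add]
      exact Nat.mul_le_mul h1 h2
  exact ⟨hP, step j hj hP⟩

lemma DB_le (n j : ℕ) (hn : 2 ≤ n) (hj : j ≤ n) : DB n j ≤ 4 ^ (4 * n.factorial) := by
  rcases Nat.lt_or_ge n 3 with h | h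
  · have : n = 2 := by omega
    subst this
    interval_cases j <;> simp [DB, PB, Nat.factorial]
  · refine (PB_le n j h hj).2.trans ?_
    rw [← pow_mul]
    apply Nat.pow_le_pow_right (by norm_num)
    have h1 : n * 2 ^ j ≤ n * 2 ^ n :=
      Nat.mul_le_mul_left _ (Nat.pow_le_pow_right (by norm_num) hj)
    refine h1.trans ?_
    clear h1 hj hn
    induction n, h using Nat.le_induction with
    | base => decide
    | succ N hN ih =>
      rw [Nat.factorial_succ, pow_succ]
      have : 2 ≤ N := by omega
      nlinarith [Nat.zero_le (2 ^ N)]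

/-- nonnegative combinations form a convex set -/
lemma convex_cone_set {n m : ℕ} (v : Vec n) (R : Fin m → Vec n) :
    Convex ℝ {x : Vec n | ∃ c : Fin m → ℝ, (∀ j, 0 ≤ c j) ∧ x = v + ∑ j, c j • R j} := by
  rintro x ⟨c, hc, rfl⟩ y ⟨d, hd, rfl⟩ a b ha hb hab
  refine ⟨fun j => a * c j + b * d j, fun j => ?_, ?_⟩
  · have := hc j; have := hd j; positivity
  · have e : v = a • v + b • v := by rw [← add_smul, hab, one_smul]
    simp only [add_smul, mul_smul, Finset.sum_add_distrib, ← Finset.smul_sum, smul_add]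
    nth_rw 3 [e]
    abel

/-- The polytope lies in the cone spanned by the edges at a vertex. -/
lemma polytope_subset_cone {n m : ℕ} (S : Set (Vec n)) (hS : S.Finite) (v : Vec n)
    (hv : v ∈ Set.extremePoints ℝ (convexHull ℝ S)) (R : Fin m → Vec n)
    (hR : ∀ E, IsFaceDim (convexHull ℝ S) E 1 → v ∈ E →
      ∃ j, E ⊆ {x | ∃ t : ℝ, 0 ≤ t ∧ x = v + t • R j}) :
    ∀ x ∈ convexHull ℝ S, ∃ c : Fin m → ℝ, (∀ j, 0 ≤ c j) ∧ x = v + ∑ j, c j • R j := by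
  have hvS : v ∈ S := extremePoints_convexHull_subset hv
  have hv' := ((convex_convexHull ℝ S).mem_extremePoints_iff_mem_sdiff_convexHull_sdiff).mp hv
  have hvn : v ∉ convexHull ℝ (S \ {v}) := fun h => hv'.2
    (convexHull_mono (sdiff_subset_sdiff_left (subset_convexHull ℝ S)) h)
  have hfin : (S \ {v}).Finite := hS.subset sdiff_subset
  obtain ⟨f, u, hfv, hfu⟩ := geometric_hahn_banach_point_closed (convex_convexHull ℝ (S \ {v}))
    (hfin.isClosed_convexHull (𝕜 := ℝ)) hvn
  have hpos : ∀ s ∈ S \ {v}, 0 < f (s - v) := by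
    intro s hs
    have := hfu s (subset_convexHull ℝ _ hs)
    rw [map_sub]; linarith
  set φ : Vec n → Vec n := fun s => (f (s - v))⁻¹ • (s - v) with hφ
  set K : Set (Vec n) := convexHull ℝ (φ '' (S \ {v})) with hK
  have hKfin : (φ '' (S \ {v})).Finite := hfin.image _
  have hKf : ∀ κ ∈ K, f κ = 1 := by
    have hc : Convex ℝ {x : Vec n | f x = 1} := by
      intro x hx y hy a b ha hb hab
      change f _ = 1 at hx hy ⊢
      simp [hx, hy, hab]
    intro κ hκ
    refine convexHull_min ?_ hc hκ
    rintro _ ⟨s, hs, rfl⟩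
    have := hpos s hs
    change f ((f (s - v))⁻¹ • (s - v)) = 1
    rw [map_smul, smul_eq_mul]
    exact inv_mul_cancel₀ this.ne'
  -- every point of P is on a ray through K
  have hPK : ∀ x ∈ convexHull ℝ S, x = v ∨ ∃ κ ∈ K, ∃ t : ℝ, 0 < t ∧ x = v + t • κ := by
    have hc : Convex ℝ {x : Vec n | x = v ∨ ∃ κ ∈ K, ∃ t : ℝ, 0 < t ∧ x = v + t • κ} := by
      rw [convex_iff_forall_pos]
      rintro x hx y hy a b ha hb hab
      have e : v = a • v + b • v := by rw [← add_smul, hab, one_smul]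
      rcases hx with rfl | ⟨κ, hκ, t, ht, rfl⟩
      · rcases hy with rfl | ⟨κ, hκ, t, ht, rfl⟩
        · left; exact e.symm
        · right
          refine ⟨κ, hκ, b * t, by positivity, ?_⟩
          nth_rw 3 [e]
          rw [smul_add, mul_smul]; abel
      · rcases hy with rfl | ⟨κ', hκ', t', ht', rfl⟩
        · right
          refine ⟨κ, hκ, a * t, by positivity, ?_⟩
          nth_rw 3 [e]
          rw [smul_add, mul_smul]; abel
        · right
          have hp : 0 < a * t + b * t' := by positivity
          refine ⟨(a * t / (a * t + b * t')) • κ + (b * t' / (a * t + b * t')) • κ',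
            convex_convexHull ℝ _ hκ hκ' (by positivity) (by positivity) (by field_simp),
            a * t + b * t', hp, ?_⟩
          rw [smul_add (a * t + b * t'), smul_smul, smul_smul, mul_div_cancel₀ _ hp.ne',
            mul_div_cancel₀ _ hp.ne']
          nth_rw 3 [e]
          simp only [smul_add, mul_smul]; abel
    intro x hx
    refine convexHull_min ?_ hc hx
    intro s hs
    by_cases hsv : s = v
    · left; exact hsv
    · right
      have hs' : s ∈ S \ {v} := ⟨hs, hsv⟩
      refine ⟨φ s, subset_convexHull ℝ _ ⟨s, hs', rfl⟩, f (s - v), hpos s hs', ?_⟩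
      simp only [hφ]
      rw [smul_smul, mul_inv_cancel₀ (hpos s hs').ne', one_smul]; abel
  -- extreme points of K are edge directions
  have hext : ∀ κ ∈ Set.extremePoints ℝ K, ∃ c : Fin m → ℝ, (∀ j, 0 ≤ c j) ∧
      κ = 0 + ∑ j, c j • R j := by
    intro κ hκ
    obtain ⟨s, hs, hsκ⟩ := extremePoints_convexHull_subset hκ
    have hfs := hpos s hs
    have hsv : s = v + f (s - v) • κ := by
      rw [← hsκ]; simp only [hφ]
      rw [smul_smul, mul_inv_cancel₀ hfs.ne', one_smul]; abel
    have hκ1 := hKf κ hκ.1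
    have hκ0 : κ ≠ 0 := by rintro rfl; simp at hκ1
    set E : Set (Vec n) := {x | x ∈ convexHull ℝ S ∧ ∃ t : ℝ, 0 ≤ t ∧ x = v + t • κ} with hE
    have hvE : v ∈ E := ⟨hv.1, 0, le_rfl, by simp⟩
    have hsE : s ∈ E := ⟨subset_convexHull ℝ _ hs.1, _, hfs.le, hsv⟩
    have hface : IsFaceDim (convexHull ℝ S) E 1 := by
      refine ⟨⟨fun x hx => hx.1, ?_⟩, ?_, ?_⟩
      · rintro y hy y' hy' x ⟨hxP, t, ht, hxt⟩ ⟨a, b, ha, hb, hab, hxy⟩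
        refine ⟨hy, ?_⟩
        have e : v = a • v + b • v := by rw [← add_smul, hab, one_smul]
        rcases hPK y hy with rfl | ⟨k1, hk1, t1, ht1, hy1⟩
        · exact ⟨0, le_rfl, by simp⟩
        · rcases hPK y' hy' with hy2 | ⟨k2, hk2, t2, ht2, hy2⟩
          · have h1 : (a * t1) • k1 = t • κ := by
              have : v + (a * t1) • k1 = v + t • κ := by
                rw [← hxt, ← hxy, hy1, hy2]
                nth_rw 1 [e]
                simp only [smul_add, mul_smul]; abel
              exact add_left_cancel this
            have h2 := congrArg f h1
            simp only [map_smul, hKf k1 hk1, hκ1, smul_eq_mul, mul_one] at h2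
            rw [h2] at h1
            have h3 : k1 = κ := by
              have htp : t ≠ 0 := by rw [← h2]; positivity
              exact smul_right_injective _ htp h1
            exact ⟨t1, ht1.le, by rw [hy1, h3]⟩
          · have h1 : (a * t1) • k1 + (b * t2) • k2 = t • κ := by
              have : v + ((a * t1) • k1 + (b * t2) • k2) = v + t • κ := by
                rw [← hxt, ← hxy, hy1, hy2]
                nth_rw 1 [e]
                simp only [smul_add, mul_smul]; abel
              exact add_left_cancel this
            have h2 := congrArg f h1
            simp only [map_add, map_smul, hKf k1 hk1, hKf k2 hk2, hκ1, smul_eq_mul, mul_one] at h2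
            have htp : 0 < t := by rw [← h2]; positivity
            have h3 : κ ∈ openSegment ℝ k1 k2 := by
              refine ⟨a * t1 / t, b * t2 / t, by positivity, by positivity, ?_, ?_⟩
              · rw [← add_div, h2, div_self htp.ne']
              · have := congrArg (fun x => t⁻¹ • x) h1
                simp only [smul_add, smul_smul] at this
                rw [inv_mul_cancel₀ htp.ne', one_smul] at this
                rw [← this, div_eq_inv_mul, div_eq_inv_mul]
            have h4 : k1 = κ := (mem_extremePoints.mp hκ).2 k1 hk1 k2 hk2 h3 |>.1
            exact ⟨t1, ht1.le, by rw [hy1, h4]⟩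
      · rintro x ⟨hx, t, ht, hxt⟩ y ⟨hy, t', ht', hyt⟩ a b ha hb hab
        refine ⟨convex_convexHull ℝ S hx hy ha hb hab, a * t + b * t', by positivity, ?_⟩
        have e : v = a • v + b • v := by rw [← add_smul, hab, one_smul]
        rw [hxt, hyt]
        nth_rw 3 [e]
        simp only [smul_add, add_smul, mul_smul]; abel
      · rw [direction_affineSpan]
        have : vectorSpan ℝ E = Submodule.span ℝ {κ} := by
          apply le_antisymm
          · rw [vectorSpan_eq_span_vsub_set_right ℝ hvE, Submodule.span_le]
            rintro _ ⟨x, ⟨_, t, _, hxt⟩, rfl⟩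
            rw [SetLike.mem_coe, Submodule.mem_span_singleton]
            exact ⟨t, by rw [hxt]; simp⟩
          · rw [Submodule.span_singleton_le_iff_mem]
            have h1 := vsub_mem_vectorSpan ℝ hsE hvE
            have h2 := (vectorSpan ℝ E).smul_mem (f (s - v))⁻¹ h1
            rw [vsub_eq_sub] at h2
            rw [← hsκ]; exact h2
        rw [this, finrank_span_singleton hκ0]
    obtain ⟨j, hj⟩ := hR E hface hvE
    obtain ⟨t, ht, hst⟩ := hj hsE
    refine ⟨fun i => if i = j then (f (s - v))⁻¹ * t else 0, ?_, ?_⟩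
    · intro i
      dsimp only
      split_ifs
      · positivity
      · exact le_rfl
    · simp only [ite_smul, zero_smul, Finset.sum_ite_eq', Finset.mem_univ, if_true, zero_add]
      rw [← hsκ]
      simp only [hφ]
      have : s - v = t • R j := by rw [hst]; simp
      nth_rw 2 [this]
      rw [smul_smul]
  have hKcone : ∀ κ ∈ K, ∃ c : Fin m → ℝ, (∀ j, 0 ≤ c j) ∧ κ = 0 + ∑ j, c j • R j := by
    intro κ hκ
    have h1 := closure_convexHull_extremePoints (hKfin.isCompact_convexHull (𝕜 := ℝ))
      (convex_convexHull ℝ _)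
    have h2 : (Set.extremePoints ℝ K).Finite := hKfin.subset extremePoints_convexHull_subset
    rw [(h2.isClosed_convexHull (𝕜 := ℝ)).closure_eq] at h1
    rw [hK, ← h1] at hκ
    exact convexHull_min hext (convex_cone_set 0 R) hκ
  intro x hx
  rcases hPK x hx with rfl | ⟨κ, hκ, t, ht, rfl⟩
  · exact ⟨0, by simp, by simp⟩
  · obtain ⟨c, hc, hκc⟩ := hKcone κ hκ
    refine ⟨fun j => t * c j, fun j => mul_nonneg ht.le (hc j), ?_⟩
    rw [hκc, zero_add, Finset.smul_sum]
    simp only [smul_smul]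

lemma primitive_bezout {n : ℕ} (r : Fin n → ℤ) (hr : IsPrimitiveVec r) :
    ∃ a : Fin n → ℤ, ∑ i, a i * r i = 1 := by
  have hp : (Ideal.span (Set.range r)).IsPrincipal := inferInstance
  obtain ⟨d, hd⟩ := hp
  have hd' : IsUnit d := by
    apply hr
    intro i
    have : r i ∈ Ideal.span (Set.range r) := Ideal.subset_span ⟨i, rfl⟩
    rw [hd] at this
    exact Ideal.mem_span_singleton.mp this
  have h1 : (1 : ℤ) ∈ Ideal.span (Set.range r) := by
    rw [hd]
    exact Ideal.mem_span_singleton.mpr hd'.dvd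
  obtain ⟨a, ha⟩ := (Ideal.mem_span_range_iff_exists_fun).mp h1
  exact ⟨a, ha⟩

/-- The first lattice point on an edge belongs to the polytope. -/
lemma edge_point {n : ℕ} (S : Set (Vec n)) (hSint : ∀ x ∈ S, IsIntVec x) (v : Vec n)
    (hv : IsIntVec v) (E : Set (Vec n)) (r : Fin n → ℤ)
    (hE : IsFaceDim (convexHull ℝ S) E 1) (hvE : v ∈ E) (hr : IsPrimitiveVec r)
    (hsub : E ⊆ {x | ∃ t : ℝ, 0 ≤ t ∧ x = v + t • intCast r}) :
    v + intCast r ∈ convexHull ℝ S := by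
  obtain ⟨hext, hconv, hdim⟩ := hE
  have hx : ∃ x ∈ E, x ≠ v := by
    by_contra hcon
    push Not at hcon
    have : E = {v} := Set.eq_singleton_iff_unique_mem.mpr ⟨hvE, hcon⟩
    rw [this, direction_affineSpan, vectorSpan_singleton] at hdim
    simp at hdim
  obtain ⟨x, hxE, hxv⟩ := hx
  have hs : ∃ s ∈ S, s ∈ E ∧ s ≠ v := by
    by_contra hcon
    push Not at hcon
    have hvP := hext.subset hvE
    have hc : Convex ℝ {y : Vec n | y ∈ convexHull ℝ S ∧ (y ∈ E → y = v)} := by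
      rw [convex_iff_forall_pos]
      rintro y ⟨hy, hyE⟩ y' ⟨hy', hyE'⟩ a b ha hb hab
      refine ⟨convex_convexHull ℝ S hy hy' ha.le hb.le hab, fun h => ?_⟩
      have h1 := hext.left_mem_of_mem_openSegment hy hy' h ⟨a, b, ha, hb, hab, rfl⟩
      have h2 := hext.right_mem_of_mem_openSegment hy hy' h ⟨a, b, ha, hb, hab, rfl⟩
      rw [hyE h1, hyE' h2, ← add_smul, hab, one_smul]
    have hSs : S ⊆ {y : Vec n | y ∈ convexHull ℝ S ∧ (y ∈ E → y = v)} :=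
      fun s hs => ⟨subset_convexHull ℝ S hs, hcon s hs⟩
    have := convexHull_min hSs hc (hext.subset hxE)
    exact hxv (this.2 hxE)
  obtain ⟨s, hsS, hsE, hsv⟩ := hs
  obtain ⟨t, ht, hst⟩ := hsub hsE
  obtain ⟨a, ha⟩ := primitive_bezout r hr
  choose p hp using hSint s hsS
  choose q hq using hv
  have hcoord : ∀ i, t * (r i : ℝ) = ((p i - q i : ℤ) : ℝ) := by
    intro i
    have := congrFun hst i
    simp only [Pi.add_apply, Pi.smul_apply, intCast, smul_eq_mul] at this
    push_cast
    rw [← hp, ← hq]; linarith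
  have htint : t = ((∑ i, a i * (p i - q i) : ℤ) : ℝ) := by
    have : t * ((∑ i, a i * r i : ℤ) : ℝ) = ((∑ i, a i * (p i - q i) : ℤ) : ℝ) := by
      push_cast
      rw [Finset.mul_sum]
      apply Finset.sum_congr rfl
      intro i _
      have := hcoord i
      push_cast at this
      rw [← this]; ring
    rw [ha] at this
    simpa using this
  have ht0 : 0 < t := by
    rcases ht.lt_or_eq with h | h
    · exact h
    · exfalso; apply hsv; rw [hst, ← h]; simp
  have ht1 : 1 ≤ t := by
    rw [htint] at ht0 ⊢
    have : 0 < ∑ i, a i * (p i - q i) := by exact_mod_cast ht0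
    exact_mod_cast this
  have h1 := convex_convexHull ℝ S (hext.subset hvE) (subset_convexHull ℝ S hsS)
    (a := 1 - t⁻¹) (b := t⁻¹) (by have := inv_le_one_of_one_le₀ ht1; linarith) (by positivity) (by ring)
  convert h1 using 1
  rw [hst, smul_add, smul_smul, inv_mul_cancel₀ ht0.ne', sub_smul, one_smul, one_smul]
  abel

/-- A facet lies in a supporting hyperplane. -/
lemma facet_side {n : ℕ} (P F : Set (Vec n)) (hP : Convex ℝ P) (hext : IsExtreme ℝ P F)
    (hconv : Convex ℝ F) (v : Vec n) (hvF : v ∈ F) (L : Vec n →ₗ[ℝ] ℝ)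
    (hL : (affineSpan ℝ F).direction = LinearMap.ker L) :
    (∀ x ∈ P, L v ≤ L x) ∨ (∀ x ∈ P, L x ≤ L v) := by
  by_contra hcon
  push Not at hcon
  obtain ⟨⟨y, hy, hyL⟩, ⟨x, hx, hxL⟩⟩ := hcon
  have hmem : ∀ z, L z = L v → z ∈ affineSpan ℝ F := by
    intro z hz
    have : z -ᵥ v ∈ (affineSpan ℝ F).direction := by
      rw [hL, LinearMap.mem_ker, vsub_eq_sub, map_sub, hz, sub_self]
    have h2 := AffineSubspace.vadd_mem_of_mem_direction this (subset_affineSpan ℝ F hvF)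
    simpa using h2
  have hFL : ∀ z ∈ F, L z = L v := by
    intro z hz
    have := AffineSubspace.vsub_mem_direction (subset_affineSpan ℝ F hz) (subset_affineSpan ℝ F hvF)
    rw [hL, LinearMap.mem_ker, vsub_eq_sub, map_sub] at this
    linarith
  -- the crossing point
  set α := (L v - L y) / (L x - L y) with hα
  have hd : 0 < L x - L y := by linarith
  have hα0 : 0 < α := div_pos (by linarith) hd
  have hα1 : 0 < 1 - α := by
    have : 1 - α = (L x - L v) / (L x - L y) := by rw [hα]; field_simp; ring
    rw [this]; exact div_pos (by linarith) hd
  set z := α • x + (1 - α) • y with hz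
  have hzP : z ∈ P := hP hx hy hα0.le hα1.le (by ring)
  have hzL : L z = L v := by
    have : α * (L x - L y) = L v - L y := by rw [hα]; field_simp
    rw [hz]; simp only [map_add, map_smul, smul_eq_mul]; linarith
  have hzF : z ∈ F := by
    obtain ⟨p, hp⟩ := Set.Nonempty.intrinsicInterior hconv ⟨v, hvF⟩
    obtain ⟨p', hp', rfl⟩ := mem_intrinsicInterior.mp hp
    have hpF : (p' : Vec n) ∈ F := by
      have := interior_subset hp'
      exact this
    have hpL := hFL _ hpF
    let g : ℝ → affineSpan ℝ F := fun ε => ⟨(p' : Vec n) + ε • ((p' : Vec n) - z), hmem _ (by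
      simp [hpL, hzL])⟩
    have hg : Continuous g := by
      apply Continuous.subtype_mk
      fun_prop
    have hg0 : g 0 = p' := by ext1; simp [g]
    have hnh : g ⁻¹' (interior ((↑) ⁻¹' F : Set (affineSpan ℝ F))) ∈ nhds (0 : ℝ) := by
      apply hg.continuousAt.preimage_mem_nhds
      rw [hg0]
      exact isOpen_interior.mem_nhds hp'
    obtain ⟨ε, hε, hball⟩ := Metric.mem_nhds_iff.mp hnh
    have hin : g (ε / 2) ∈ ((↑) ⁻¹' F : Set (affineSpan ℝ F)) := by
      apply interior_subset
      apply hball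
      rw [Metric.mem_ball, Real.dist_eq, sub_zero, abs_of_pos (by positivity)]
      linarith
    have hin' : (p' : Vec n) + (ε / 2) • ((p' : Vec n) - z) ∈ F := hin
    refine hext.left_mem_of_mem_openSegment hzP (hext.subset hin') hpF ?_
    refine ⟨(ε / 2) / (1 + ε / 2), 1 / (1 + ε / 2), by positivity, by positivity, by field_simp; ring, ?_⟩
    have h1 : (1 + ε / 2 : ℝ) ≠ 0 := by positivity
    ext i
    simp only [Pi.add_apply, Pi.smul_apply, Pi.sub_apply, smul_eq_mul]
    field_simp
    ring
  have hxF := hext.left_mem_of_mem_openSegment hx hy hzF ⟨α, 1 - α, hα0, hα1, by ring, rfl⟩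
  have := hFL x hxF
  linarith

lemma index_bound {n : ℕ} (d : (Fin n → ℤ) →+ ℤ) (w : Fin n → ℤ) (hw : d w ≠ 0) :
    (AddSubgroup.closure {y | d y = d w}).index ≠ 0 ∧
    ((AddSubgroup.closure {y | d y = d w}).index : ℤ) ≤ |d w| := by
  set H := (AddSubgroup.zmultiples (d w)).comap d with hH
  have hle : H ≤ AddSubgroup.closure {y | d y = d w} := by
    intro y hy
    obtain ⟨k, hk⟩ := AddSubgroup.mem_zmultiples_iff.mp (AddSubgroup.mem_comap.mp hy)
    have hw' : w ∈ AddSubgroup.closure {y | d y = d w} := AddSubgroup.subset_closure rfl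
    have h1 : (y - k • w) + w ∈ AddSubgroup.closure {y | d y = d w} := by
      apply AddSubgroup.subset_closure
      change d _ = d w
      rw [map_add, map_sub, map_zsmul, hk]
      ring
    have e : y = ((y - k • w) + w) - w + k • w := by abel
    rw [e]
    exact add_mem (sub_mem h1 hw') (zsmul_mem hw' k)
  have h1 : H.index ∣ (d w).natAbs := by
    rw [hH, AddSubgroup.index_comap, ← Int.index_zmultiples]
    exact AddSubgroup.relIndex_dvd_index_of_normal _ _
  have h2 := (AddSubgroup.index_dvd_of_le hle).trans h1
  have hpos : 0 < (d w).natAbs := Int.natAbs_pos.mpr hw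
  refine ⟨fun h0 => ?_, ?_⟩
  · rw [h0] at h2
    exact hpos.ne' (Nat.eq_zero_of_zero_dvd h2)
  · have := Nat.le_of_dvd hpos h2
    rw [Int.abs_eq_natAbs]
    exact_mod_cast this

/-- determinants with rows from `r` are bounded by `starDet` -/
lemma det_le_starDet {n m : ℕ} (r : Fin m → (Fin n → ℤ)) (g : Fin n → Fin m) :
    |(Matrix.of fun i j => r (g i) j).det| ≤ starDet r := by
  classical
  have hnn : ∀ g : Fin n → Fin m, 0 ≤ |(Matrix.of fun i j => r (g i) j).det| :=
    fun g => abs_nonneg _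
  by_cases hinj : Function.Injective g
  · set σ := Tuple.sort g
    have hmono : StrictMono (g ∘ σ) :=
      (Tuple.monotone_sort g).strictMono_of_injective (hinj.comp σ.injective)
    have e : |(Matrix.of fun i j => r (g i) j).det| =
        |(Matrix.of fun i j => r ((g ∘ σ) i) j).det| := by
      have := Matrix.det_permute σ (Matrix.of fun i j => r (g i) j)
      have h2 : (Matrix.of fun i j => r ((g ∘ σ) i) j) =
        (Matrix.of fun i j => r (g i) j).submatrix σ id := by ext; simp
      rw [h2, this, abs_mul]
      rcases Int.units_eq_one_or (Equiv.Perm.sign σ) with h | h <;> simp [h]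
    rw [e]
    unfold starDet
    refine Finset.single_le_sum (f := fun g : Fin n → Fin m =>
      |(Matrix.of fun i j => r (g i) j).det|) (fun g _ => hnn g) ?_
    simp [hmono]
  · have : (Matrix.of fun i j => r (g i) j).det = 0 := by
      unfold Function.Injective at hinj
      push Not at hinj
      obtain ⟨a, b, hab, hne⟩ := hinj
      apply Matrix.det_zero_of_row_eq hne
      ext j
      simp [hab]
    rw [this, abs_zero]
    unfold starDet
    exact Finset.sum_nonneg (fun g _ => hnn g)

lemma starDet_pos_le {n m : ℕ} (r : Fin m → (Fin n → ℤ)) (h : 0 < starDet r) : n ≤ m := by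
  by_contra hcon
  have : starDet r = 0 := by
    unfold starDet
    apply Finset.sum_eq_zero
    intro g hg
    exfalso
    have h1 := (Finset.mem_filter.mp hg).2.injective
    have := Fintype.card_le_of_injective g h1
    simp at this
    omega
  omega

/-- The determinant as a linear function of the first row. -/
def firstRowDet {A : Type*} [CommRing A] {k : ℕ} (rows : Fin k → Fin (k + 1) → A) :
    (Fin (k + 1) → A) →ₗ[A] A :=
  (Matrix.detRowAlternating (R := A) (n := Fin (k + 1))).toMultilinearMap.toLinearMap
    (Fin.cons 0 rows) 0

lemma firstRowDet_apply {A : Type*} [CommRing A] {k : ℕ} (rows : Fin k → Fin (k + 1) → A)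
    (x : Fin (k + 1) → A) :
    firstRowDet rows x = (Matrix.of (Fin.cons x rows : Fin (k + 1) → Fin (k + 1) → A)).det := by
  unfold firstRowDet
  rw [MultilinearMap.toLinearMap_apply]
  have : Function.update (Fin.cons 0 rows : Fin (k + 1) → Fin (k + 1) → A) 0 x =
    Fin.cons x rows := Fin.update_cons_zero _ _ _
  rw [this]
  rfl

lemma firstRowDet_cast {k : ℕ} (rows : Fin k → Fin (k + 1) → ℤ) (y : Fin (k + 1) → ℤ) :
    firstRowDet (fun i => intCast (rows i)) (intCast y) = ((firstRowDet rows y : ℤ) : ℝ) := by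
  rw [firstRowDet_apply, firstRowDet_apply, Int.cast_det]
  congr 1
  ext i j
  refine Fin.cases ?_ (fun i => ?_) i <;> simp [intCast]

/-- The integer functional attached to a facet through a vertex. -/
lemma facet_functional {k m : ℕ} (r : Fin m → Fin (k + 1) → ℤ) (L : Vec (k + 1) →ₗ[ℝ] ℝ)
    (hL0 : L ≠ 0)
    (hspan : LinearMap.ker L ≤ Submodule.span ℝ {x | ∃ j, x = intCast (r j) ∧ L x = 0}) :
    ∃ (f : Fin k → Fin m) (a : ℝ), a ≠ 0 ∧
      ∀ y, ((firstRowDet (fun i => r (f i)) y : ℤ) : ℝ) = a * L (intCast y) := by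
  set s : Set (Vec (k + 1)) := {x | ∃ j, x = intCast (r j) ∧ L x = 0} with hs
  have hsp : Submodule.span ℝ s = LinearMap.ker L := by
    apply le_antisymm _ hspan
    rw [Submodule.span_le]
    rintro x ⟨j, _, hx⟩
    exact hx
  have hfr : Module.finrank ℝ (Submodule.span ℝ s) = k := by
    rw [hsp]
    have h1 := LinearMap.finrank_range_add_finrank_ker L
    have h2 : LinearMap.range L = ⊤ := LinearMap.range_eq_top.mpr (LinearMap.surjective hL0)
    rw [h2, finrank_top, Module.finrank_self, Module.finrank_fin_fun] at h1
    omega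
  have hex := Submodule.exists_fun_fin_finrank_span_eq ℝ s
  rw [hfr] at hex
  obtain ⟨f', hf', hf'span, hf'ind⟩ := hex
  choose f hf hfL using hf'
  have hff : (fun i => intCast (r (f i))) = f' := by
    funext i; exact (hf i).symm
  obtain ⟨x0, hx0⟩ := LinearMap.surjective hL0 1
  have hker : ∀ x, L x = 0 → firstRowDet f' x = 0 := by
    intro x hx
    rw [firstRowDet_apply]
    by_contra hdet
    have h1 : IsUnit (Matrix.of (Fin.cons x f' : Fin (k + 1) → Fin (k + 1) → ℝ)) := by
      rw [Matrix.isUnit_iff_isUnit_det]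
      exact isUnit_iff_ne_zero.mpr hdet
    have h2 := Matrix.linearIndependent_rows_iff_isUnit.mpr h1
    have h3 : LinearIndependent ℝ (Fin.cons x f' : Fin (k + 1) → Fin (k + 1) → ℝ) := h2
    rw [linearIndependent_finCons, hf'span, hsp] at h3
    exact h3.2 hx
  have ha : firstRowDet f' x0 ≠ 0 := by
    rw [firstRowDet_apply]
    have h3 : LinearIndependent ℝ (Fin.cons x0 f' : Fin (k + 1) → Fin (k + 1) → ℝ) := by
      rw [linearIndependent_finCons, hf'span, hsp]
      refine ⟨hf'ind, ?_⟩
      rw [LinearMap.mem_ker, hx0]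
      exact one_ne_zero
    have h4 : IsUnit (Matrix.of (Fin.cons x0 f' : Fin (k + 1) → Fin (k + 1) → ℝ)) :=
      Matrix.linearIndependent_rows_iff_isUnit.mp h3
    rw [Matrix.isUnit_iff_isUnit_det] at h4
    exact h4.ne_zero
  refine ⟨f, firstRowDet f' x0, ha, ?_⟩
  intro y
  rw [← firstRowDet_cast, hff]
  have h5 : firstRowDet f' (intCast y - L (intCast y) • x0) = 0 := by
    apply hker
    rw [map_sub, map_smul, hx0]
    simp
  rw [map_sub, map_smul, smul_eq_mul] at h5
  linarith

lemma firstRowDet_le_starDet {k m : ℕ} (r : Fin m → Fin (k + 1) → ℤ) (f : Fin k → Fin m)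
    (j : Fin m) : |firstRowDet (fun i => r (f i)) (r j)| ≤ starDet r := by
  have h := det_le_starDet r (Fin.cons j f)
  rw [firstRowDet_apply]
  convert h using 3
  ext a b
  refine Fin.cases ?_ (fun a => ?_) a <;> simp

lemma intCast_add_aux {n : ℕ} {ι : Type*} [Fintype ι] (Q : ℤ) (z : ι → ℤ) (v : Vec n)
    (hv : IsIntVec v) (x : ι → Vec n) (hx : ∀ i, IsIntVec (x i)) :
    IsIntVec ((Q : ℝ) • v - ∑ i, (z i : ℝ) • x i) := by
  intro c
  obtain ⟨p, hp⟩ := hv c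
  choose q hq using fun i => hx i c
  refine ⟨Q * p - ∑ i, z i * q i, ?_⟩
  simp [hp, hq]

/-- The core: the value of a supporting functional at `v` is bounded. -/
lemma core {n m : ℕ} (P : Set (Vec n)) (hPc : Convex ℝ P) (v : Vec n)
    (hv : v ∈ Set.extremePoints ℝ P) (hvi : IsIntVec v) (R : Fin m → Vec n)
    (hRi : ∀ j, IsIntVec (R j)) (hR0 : ∀ j, R j ≠ 0)
    (hRP : ∀ j, v + R j ∈ P)
    (lam : Fin m → ℝ) (hlam : ∀ j, 0 ≤ lam j) (hvl : v = ∑ j, lam j • R j)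
    (L : Vec n →ₗ[ℝ] ℝ) (hLv : 0 < L v) (hLP : ∀ x ∈ P, L v ≤ L x)
    (D : ℝ) (hD : ∀ j, L (R j) ≤ D) (hD0 : 0 < D) (B : ℝ) (hB : ∀ j ≤ n, (DB n j : ℝ) ≤ B)
    (hint : {x : Vec n | IsIntVec x} ∩ (convexHull ℝ (P ∪ {0}) \ P) = {0}) :
    L v < B * D := by
  classical
  by_contra hcon
  push Not at hcon
  have hLR : ∀ j, 0 ≤ L (R j) := by
    intro j
    have := hLP _ (hRP j)
    rw [map_add] at this; linarith
  -- v is in the hull of 0 and the v + R j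
  have hmem : v ∈ convexHull ℝ (insert 0 (Set.range fun j => v + R j)) := by
    have hΛ : 0 ≤ ∑ j, lam j := Finset.sum_nonneg (fun j _ => hlam j)
    have hΛ1 : (0 : ℝ) < 1 + ∑ j, lam j := by linarith
    refine mem_convexHull_of_exists_fintype (ι := Option (Fin m))
      (fun o => o.elim (1 / (1 + ∑ j, lam j)) (fun j => lam j / (1 + ∑ j, lam j)))
      (fun o => o.elim 0 (fun j => v + R j)) ?_ ?_ ?_ ?_
    · rintro (_ | j)
      · simp only [Option.elim]; positivity
      · have := hlam j
        simp only [Option.elim]; positivity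
    · rw [Fintype.sum_option]
      simp only [Option.elim]
      rw [← Finset.sum_div, ← add_div, div_self hΛ1.ne']
    · rintro (_ | j)
      · exact Set.mem_insert _ _
      · exact Set.mem_insert_of_mem _ ⟨j, rfl⟩
    · rw [Fintype.sum_option]
      simp only [Option.elim, smul_zero, zero_add, smul_add, Finset.sum_add_distrib]
      rw [← Finset.sum_smul, ← Finset.sum_div]
      have e : ∑ j, (lam j / (1 + ∑ j, lam j)) • R j = (1 / (1 + ∑ j, lam j)) • v := by
        conv_rhs => rw [hvl]
        rw [Finset.smul_sum]
        apply Finset.sum_congr rfl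
        intro j _
        rw [smul_smul]; congr 1; ring
      rw [e, ← add_smul, ← add_div, add_comm (∑ j, lam j) 1, div_self hΛ1.ne', one_smul]
  obtain ⟨ι, _, x, w, hx, hxind, hw, hw1, hwx⟩ := eq_pos_convex_span_of_mem_convexHull hmem
  have hi0 : ∃ i0, x i0 = 0 := by
    by_contra hno
    push Not at hno
    have hv' := (hPc.mem_extremePoints_iff_mem_sdiff_convexHull_sdiff).mp hv
    apply hv'.2
    refine mem_convexHull_of_exists_fintype w x (fun i => (hw i).le) hw1 ?_ hwx
    intro i
    rcases Set.mem_insert_iff.mp (hx ⟨i, rfl⟩) with h | ⟨j, hj⟩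
    · exact absurd h (hno i)
    · rw [← hj]
      refine ⟨hRP j, ?_⟩
      simp [hR0 j]
  obtain ⟨i0, hi0⟩ := hi0
  have hxj : ∀ i : {i // i ≠ i0}, ∃ j, x i = v + R j := by
    intro i
    rcases Set.mem_insert_iff.mp (hx ⟨i.1, rfl⟩) with h | ⟨j, hj⟩
    · exact absurd (hxind.injective (h.trans hi0.symm)) i.2
    · exact ⟨j, hj.symm⟩
  choose J hJ using hxj
  have hcard : Fintype.card {i // i ≠ i0} ≤ n := by
    have h1 := hxind.card_le_finrank_succ
    have h3 : Fintype.card ι ≤ n + 1 := h1.trans (Nat.add_le_add_right (by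
      have h2 := Submodule.finrank_le (vectorSpan ℝ (Set.range x))
      rw [Module.finrank_fin_fun] at h2
      exact h2) 1)
    rw [Fintype.card_subtype_compl, Fintype.card_subtype_eq]
    omega
  set b : {i // i ≠ i0} → ℝ := fun i => w i with hb
  have hsum : w i0 + ∑ i, b i = 1 := by
    rw [← hw1, hb]
    exact (Fintype.sum_eq_add_sum_subtype_ne w i0).symm
  have hvb : v = ∑ i, b i • (v + R (J i)) := by
    have h1 := Fintype.sum_eq_add_sum_subtype_ne (fun i => w i • x i) i0
    rw [hwx, hi0, smul_zero, zero_add] at h1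
    nth_rw 1 [h1]
    apply Finset.sum_congr rfl
    intro i _
    rw [hJ i]
  have hbpos : 0 < ∑ i, b i := by
    rcases (Finset.sum_nonneg (fun i _ => (hw i.1).le) : 0 ≤ ∑ i, b i).lt_or_eq with h | h
    · exact h
    · exfalso
      have h0 : ∀ i, b i = 0 := by
        intro i
        exact (Finset.sum_eq_zero_iff_of_nonneg (fun i _ => (hw i.1).le)).mp h.symm i
          (Finset.mem_univ i)
      rw [hvb] at hLv
      simp [h0] at hLv
  obtain ⟨Q, z, hc, hcpos, hcB⟩ := diophantine n hcard b (fun i => (hw i.1).le) hbpos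
    (by linarith [hw i0]) B hB
  set c : {i // i ≠ i0} → ℝ := fun i => (Q : ℝ) * b i - z i with hcdef
  set u : Vec n := (Q : ℝ) • v - ∑ i, (z i : ℝ) • (v + R (J i)) with hu
  have huc : u = ∑ i, c i • (v + R (J i)) := by
    rw [hu]
    nth_rw 1 [hvb]
    rw [Finset.smul_sum, ← Finset.sum_sub_distrib]
    apply Finset.sum_congr rfl
    intro i _
    rw [hcdef, smul_smul, ← sub_smul]
  have hui : IsIntVec u := by
    apply intCast_add_aux _ _ _ hvi
    intro i a
    obtain ⟨p, hp⟩ := hvi a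
    obtain ⟨q, hq⟩ := hRi (J i) a
    exact ⟨p + q, by simp [hp, hq]⟩
  have hB0 : 0 ≤ B := le_trans (Nat.cast_nonneg _) (hB 0 (Nat.zero_le _))
  have hc0 : 0 < 1 - ∑ i, c i := by
    by_contra h
    push Not at h
    have := mul_nonpos_of_nonpos_of_nonneg h hB0
    linarith
  have huP : u ∈ convexHull ℝ (P ∪ {0}) := by
    refine mem_convexHull_of_exists_fintype (ι := Option {i // i ≠ i0})
      (fun o => o.elim (1 - ∑ i, c i) c)
      (fun o => o.elim 0 (fun i => v + R (J i))) ?_ ?_ ?_ ?_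
    · rintro (_ | j)
      · exact hc0.le
      · exact hc j
    · rw [Fintype.sum_option]
      simp only [Option.elim]
      ring
    · rintro (_ | j)
      · right; rfl
      · left; exact hRP _
    · rw [Fintype.sum_option]
      simp only [Option.elim, smul_zero, zero_add]
      exact huc.symm
  have hLu : L u = ∑ i, c i * (L v + L (R (J i))) := by
    rw [huc, map_sum]
    simp only [map_smul, map_add, smul_eq_mul]
  have hup : u ∉ P := by
    intro h
    have h1 := hLP u h
    have h2 : L u ≤ ∑ i, c i * (L v + D) := by
      rw [hLu]
      apply Finset.sum_le_sum
      intro i _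
      apply mul_le_mul_of_nonneg_left _ (hc i)
      linarith [hD (J i)]
    rw [← Finset.sum_mul] at h2
    have h3 : D ≤ (1 - ∑ i, c i) * L v := by
      calc D ≤ ((1 - ∑ i, c i) * B) * D := by nlinarith
        _ = (1 - ∑ i, c i) * (B * D) := by ring
        _ ≤ _ := mul_le_mul_of_nonneg_left hcon hc0.le
    nlinarith
  have hu0 : u = 0 := by
    have : u ∈ {x : Vec n | IsIntVec x} ∩ (convexHull ℝ (P ∪ {0}) \ P) := ⟨hui, huP, hup⟩
    rw [hint] at this
    exact this
  have h4 : (∑ i, c i) * L v ≤ L u := by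
    rw [hLu, Finset.sum_mul]
    apply Finset.sum_le_sum
    intro i _
    apply mul_le_mul_of_nonneg_left _ (hc i)
    linarith [hLR (J i)]
  rw [hu0, map_zero] at h4
  nlinarith

/-- Theorem 6: if `P` is an `n`-dimensional integer convex polyhedron not
containing `0`, `v` a vertex of `P` interior to `conv(P ∪ {0})` contained in exactly `m`
edges, `F` an `(n-1)`-dimensional face of `P` containing `v`, and the only integer point of
`conv(P ∪ {0})` outside `P` is `0`, then the integer distance
`ρ(F, 0)` (the index in `ℤⁿ` of the subgroup generated by `ℤⁿ ∩ aff F`) is finite and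
`ρ(F, 0) < (nm)^{4·n!} · det oSt_v`. -/
theorem statement6 (n : ℕ) (hn : 2 ≤ n)
    (S : Set (Vec n)) (hSfin : S.Finite) (hSint : ∀ x ∈ S, IsIntVec x)
    (P : Set (Vec n)) (hP : P = convexHull ℝ S)
    (hdim : affineSpan ℝ P = ⊤)
    (h0 : (0 : Vec n) ∉ P)
    (v : Vec n) (hv : v ∈ Set.extremePoints ℝ P)
    (hvint : v ∈ interior (convexHull ℝ (P ∪ {0})))
    (m : ℕ) (E : Fin m → Set (Vec n)) (r : Fin m → (Fin n → ℤ))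
    (hE : HasEdgeData P v E r)
    (F : Set (Vec n)) (hF : IsFaceDim P F (n - 1)) (hvF : v ∈ F)
    (hint : {x : Vec n | IsIntVec x} ∩ (convexHull ℝ (P ∪ {0}) \ P) = {0}) :
    (AddSubgroup.closure
        {y : Fin n → ℤ | intCast y ∈ (affineSpan ℝ F : Set (Vec n))}).index ≠ 0 ∧
    ((AddSubgroup.closure
        {y : Fin n → ℤ | intCast y ∈ (affineSpan ℝ F : Set (Vec n))}).index : ℤ)
      < ((n : ℤ) * (m : ℤ)) ^ (4 * n.factorial) * starDet r := by
  classical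
  obtain ⟨k, rfl⟩ : ∃ k, n = k + 1 := ⟨n - 1, by omega⟩
  subst hP
  set P := convexHull ℝ S with hPdef
  have hPc : Convex ℝ P := convex_convexHull ℝ S
  have hvi : IsIntVec v := hSint v (extremePoints_convexHull_subset hv)
  obtain ⟨hEinj, hEdata, hEall⟩ := hE
  set R : Fin m → Vec (k + 1) := fun j => intCast (r j) with hR
  have hRP : ∀ j, v + R j ∈ P := fun j =>
    edge_point S hSint v hvi (E j) (r j) (hEdata j).1 (hEdata j).2.1 (hEdata j).2.2.1
      (hEdata j).2.2.2
  have hRi : ∀ j, IsIntVec (R j) := fun j i => ⟨r j i, rfl⟩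
  have hR0 : ∀ j, R j ≠ 0 := by
    intro j h
    have h1 : ∀ i, r j i = 0 := by
      intro i
      have := congrFun h i
      simpa [hR, intCast] using this
    have := (hEdata j).2.2.1 0 (fun i => by rw [h1 i])
    exact not_isUnit_zero this
  have hcone : ∀ x ∈ P, ∃ c : Fin m → ℝ, (∀ j, 0 ≤ c j) ∧ x = v + ∑ j, c j • R j := by
    apply polytope_subset_cone S hSfin v hv R
    intro G hG hvG
    obtain ⟨j, hj⟩ := hEall G hG hvG
    exact ⟨j, hj ▸ (hEdata j).2.2.2⟩
  -- the functional
  obtain ⟨hFext, hFconv, hFdim⟩ := hF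
  rw [Nat.add_sub_cancel] at hFdim
  have hFL : ∃ L : Vec (k + 1) →ₗ[ℝ] ℝ, L ≠ 0 ∧
      (affineSpan ℝ F).direction = LinearMap.ker L := by
    have hlt : (affineSpan ℝ F).direction < ⊤ := by
      rw [lt_top_iff_ne_top]
      intro h
      rw [h, finrank_top, Module.finrank_fin_fun] at hFdim
      omega
    obtain ⟨L, hL0, hL⟩ := Submodule.exists_le_ker_of_lt_top _ hlt
    refine ⟨L, hL0, Submodule.eq_of_le_of_finrank_eq hL ?_⟩
    rw [hFdim]
    have h1 := LinearMap.finrank_range_add_finrank_ker L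
    have h2 : LinearMap.range L = ⊤ := LinearMap.range_eq_top.mpr (LinearMap.surjective hL0)
    rw [h2, finrank_top, Module.finrank_self, Module.finrank_fin_fun] at h1
    omega
  have hFL' : ∃ L : Vec (k + 1) →ₗ[ℝ] ℝ, L ≠ 0 ∧
      (affineSpan ℝ F).direction = LinearMap.ker L ∧ ∀ x ∈ P, L v ≤ L x := by
    obtain ⟨L, hL0, hL⟩ := hFL
    rcases facet_side P F hPc hFext hFconv v hvF L hL with h | h
    · exact ⟨L, hL0, hL, h⟩
    · refine ⟨-L, neg_ne_zero.mpr hL0, ?_, ?_⟩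
      · rw [hL]; ext x; simp
      · intro x hx
        simpa using h x hx
  obtain ⟨L, hL0, hL, hLP⟩ := hFL'
  have hLR : ∀ j, 0 ≤ L (R j) := by
    intro j
    have := hLP _ (hRP j)
    rw [map_add] at this; linarith
  have haff : ∀ x, x ∈ affineSpan ℝ F ↔ L x = L v := by
    intro x
    have h1 := AffineSubspace.vsub_right_mem_direction_iff_mem (subset_affineSpan ℝ F hvF) x
    rw [← h1, hL, LinearMap.mem_ker, vsub_eq_sub, map_sub, sub_eq_zero]
  -- points beyond v
  obtain ⟨ε, hε, hball⟩ := Metric.isOpen_iff.mp isOpen_interior v hvint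
  have hnear : ∀ y : Vec (k + 1), ∃ δ : ℝ, 0 < δ ∧ v + δ • y ∈ convexHull ℝ (P ∪ {0}) := by
    intro y
    refine ⟨ε / 2 / (‖y‖ + 1), by positivity, ?_⟩
    apply interior_subset
    apply hball
    rw [Metric.mem_ball, dist_eq_norm, add_sub_cancel_left, norm_smul, Real.norm_of_nonneg
      (by positivity), div_mul_eq_mul_div, div_lt_iff₀ (by positivity)]
    nlinarith [norm_nonneg y]
  have hLv : 0 < L v := by
    by_contra hcon
    push Not at hcon
    obtain ⟨y, hy⟩ := LinearMap.surjective hL0 (-1)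
    obtain ⟨δ, hδ, hmem⟩ := hnear y
    have hc : Convex ℝ {x : Vec (k + 1) | L v ≤ L x} :=
      convex_halfSpace_ge L.isLinear _
    have hsub : P ∪ {0} ⊆ {x : Vec (k + 1) | L v ≤ L x} := by
      rintro x (hx | hx)
      · exact hLP x hx
      · rw [Set.mem_singleton_iff] at hx
        change L v ≤ L x
        rw [hx, map_zero]; exact hcon
    have h1 : L v ≤ L (v + δ • y) := convexHull_min hsub hc hmem
    rw [map_add, map_smul, hy, smul_eq_mul] at h1
    linarith
  have hlam : ∃ lam : Fin m → ℝ, (∀ j, 0 ≤ lam j) ∧ v = ∑ j, lam j • R j := by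
    obtain ⟨δ, hδ, hmem⟩ := hnear v
    rw [Set.union_singleton, convexHull_insert ⟨v, hv.1⟩, hPc.convexHull_eq,
      mem_convexJoin] at hmem
    obtain ⟨o, ho, x, hx, a, b, ha, hb, hab, hxy⟩ := hmem
    rw [Set.mem_singleton_iff] at ho
    rw [ho, smul_zero, zero_add] at hxy
    obtain ⟨c, hc, hxc⟩ := hcone x hx
    have hp : 0 < 1 + δ - b := by linarith
    refine ⟨fun j => (1 + δ - b)⁻¹ * (b * c j), fun j => ?_, ?_⟩
    · have := hc j; positivity
    · simp only [mul_smul]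
      rw [← Finset.smul_sum, ← Finset.smul_sum]
      have h1 : b • ∑ j, c j • R j = (1 + δ - b) • v := by
        have h2 : ∑ j, c j • R j = x - v := by rw [hxc]; abel
        rw [h2, smul_sub, hxy, sub_smul, add_smul, one_smul]
      rw [h1, smul_smul, inv_mul_cancel₀ hp.ne', one_smul]
  obtain ⟨lam, hlam, hvl⟩ := hlam
  -- the determinant functional
  have hspan : LinearMap.ker L ≤ Submodule.span ℝ {x | ∃ j, x = intCast (r j) ∧ L x = 0} := by
    rw [← hL, direction_affineSpan, vectorSpan_eq_span_vsub_set_right ℝ hvF, Submodule.span_le]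
    rintro _ ⟨x, hx, rfl⟩
    obtain ⟨c, hc, hxc⟩ := hcone x (hFext.subset hx)
    have hLx : L x = L v := (haff x).mp (subset_affineSpan ℝ F hx)
    have h0 : ∑ j, c j * L (R j) = 0 := by
      have := congrArg L hxc
      rw [map_add, map_sum] at this
      simp only [map_smul, smul_eq_mul] at this
      linarith
    have h1 := (Finset.sum_eq_zero_iff_of_nonneg
      (fun j _ => mul_nonneg (hc j) (hLR j))).mp h0
    have e : x -ᵥ v = ∑ j, c j • R j := by rw [hxc, vsub_eq_sub]; abel
    change x -ᵥ v ∈ _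
    rw [e]
    apply Submodule.sum_mem
    intro j _
    rcases mul_eq_zero.mp (h1 j (Finset.mem_univ j)) with h | h
    · rw [h, zero_smul]; exact Submodule.zero_mem _
    · exact Submodule.smul_mem _ _ (Submodule.subset_span ⟨j, rfl, h⟩)
  obtain ⟨f, a, ha, hfa⟩ := facet_functional r L hL0 hspan
  set d := firstRowDet (fun i => r (f i)) with hd
  choose w hw using hvi
  have hwv : intCast w = v := by funext i; exact (hw i).symm
  have hset : {y : Fin (k + 1) → ℤ | intCast y ∈ (affineSpan ℝ F : Set (Vec (k + 1)))} =
      {y | d.toAddMonoidHom y = d.toAddMonoidHom w} := by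
    ext y
    change intCast y ∈ affineSpan ℝ F ↔ d y = d w
    rw [haff, ← hwv, ← Int.cast_inj (α := ℝ), hfa, hfa]
    exact ⟨fun h => by rw [h], fun h => mul_left_cancel₀ ha h⟩
  have hdw : d w ≠ 0 := by
    intro h
    have h1 := hfa w
    rw [h, hwv, Int.cast_zero] at h1
    rcases mul_eq_zero.mp h1.symm with h | h
    · exact ha h
    · exact hLv.ne' h
  have hidx := index_bound d.toAddMonoidHom w hdw
  rw [hset]
  refine ⟨hidx.1, lt_of_le_of_lt hidx.2 ?_⟩
  change |d w| < _
  -- apply the core bound to |a| L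
  have habs : ∀ y : Fin (k + 1) → ℤ, 0 ≤ L (intCast y) →
      (|a| • L) (intCast y) = ((|d y| : ℤ) : ℝ) := by
    intro y hy
    rw [Int.cast_abs, hfa, abs_mul, abs_of_nonneg hy]
    rfl
  have hapos : 0 < |a| := abs_pos.mpr ha
  have hstar : 0 < starDet r := by
    have h1 : ∃ j, 0 < L (R j) := by
      by_contra hno
      push Not at hno
      rw [hvl, map_sum] at hLv
      have : ∑ j, L (lam j • R j) ≤ 0 := by
        apply Finset.sum_nonpos
        intro j _
        rw [map_smul, smul_eq_mul]
        exact mul_nonpos_of_nonneg_of_nonpos (hlam j) (hno j)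
      linarith
    obtain ⟨j, hj⟩ := h1
    have h2 := habs (r j) hj.le
    have h3 : (0 : ℝ) < ((|d (r j)| : ℤ) : ℝ) := by
      rw [← h2]; exact mul_pos hapos hj
    have h4 : 0 < |d (r j)| := by exact_mod_cast h3
    exact h4.trans_le (firstRowDet_le_starDet r f j)
  have hnm := starDet_pos_le r hstar
  have hB : ∀ j ≤ k + 1, (DB (k + 1) j : ℝ) ≤
      (((((k + 1 : ℕ) : ℤ) * (m : ℤ)) ^ (4 * (k + 1).factorial) : ℤ) : ℝ) := by
    intro j hj
    have h1 := DB_le (k + 1) j hn hj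
    have h2 : 4 ≤ (k + 1) * m := by nlinarith
    have h3 := h1.trans (Nat.pow_le_pow_left h2 _)
    exact_mod_cast h3
  have hfinal := core P hPc v hv (fun i => ⟨w i, hw i⟩) R hRi hR0 hRP lam hlam hvl (|a| • L)
    (mul_pos hapos hLv) (fun x hx => mul_le_mul_of_nonneg_left (hLP x hx) hapos.le)
    (starDet r : ℝ) (fun j => by
      rw [habs (r j) (hLR j)]
      exact_mod_cast firstRowDet_le_starDet r f j) (by exact_mod_cast hstar) _ hB hint
  rw [← hwv, habs w (by rw [hwv]; exact hLv.le)] at hfinal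
  exact_mod_cast hfinal
end
end

section
/- Let P = conv(S) ⊂ ℝ^N, where S is a finite set equal to the set of extreme points of P, and let d ≥ 2 be the dimension of the affine hull of P. Assign to each x ∈ S a mass ν_x > 0, and for a nonempty subset M' ⊆ S let c(M') = (Σ_{x∈M'} ν_x·x) / (Σ_{x∈M'} ν_x) be its center of mass. Let 𝔗 be a finite family of d-element affinely independent subsets of S such that the simplices conv(Δ), Δ ∈ 𝔗, have pairwise disjoint relative interiors and their union equals the relative boundary of P. Then the relative interior of P equals ⋃_{Δ∈𝔗} relint( conv(Δ ∪ {c(S \ Δ)}) ). -/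
open Set

noncomputable section

/-- The center of mass of a finite set of points of `ℝ^N` with masses `ν`. -/
def massCenter {N : ℕ} (ν : (Fin N → ℝ) → ℝ) (M : Finset (Fin N → ℝ)) : Fin N → ℝ :=
  (∑ x ∈ M, ν x)⁻¹ • ∑ x ∈ M, ν x • x

section Helpers

variable {N : ℕ}

theorem mem_relint_iff {s : Set (Fin N → ℝ)} {x : Fin N → ℝ} :
    x ∈ intrinsicInterior ℝ s ↔ x ∈ affineSpan ℝ s ∧
      ∃ ε > 0, ∀ y ∈ affineSpan ℝ s, dist y x < ε → y ∈ s := by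
  rw [mem_intrinsicInterior]
  constructor
  · rintro ⟨y, hy, rfl⟩
    refine ⟨y.2, ?_⟩
    rw [mem_interior_iff_mem_nhds, Metric.mem_nhds_iff] at hy
    obtain ⟨ε, hε, h⟩ := hy
    exact ⟨ε, hε, fun z hz hd => h (show (⟨z, hz⟩ : affineSpan ℝ s) ∈ Metric.ball y ε from hd)⟩
  · rintro ⟨hx, ε, hε, h⟩
    refine ⟨⟨x, hx⟩, ?_, rfl⟩
    rw [mem_interior_iff_mem_nhds, Metric.mem_nhds_iff]
    exact ⟨ε, hε, fun z hz => h z z.2 hz⟩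

theorem relint_comb {T : Set (Fin N → ℝ)} (hT : Convex ℝ T) {c q : Fin N → ℝ}
    (hc : c ∈ intrinsicInterior ℝ T) (hq : q ∈ T) {a b : ℝ} (ha : 0 < a) (hb : 0 ≤ b)
    (hab : a + b = 1) : a • c + b • q ∈ intrinsicInterior ℝ T := by
  have hcT := intrinsicInterior_subset hc
  rw [mem_relint_iff] at hc ⊢
  obtain ⟨hca, ε, hε, h⟩ := hc
  have hp := subset_affineSpan ℝ T (hT hcT hq ha.le hb hab)
  refine ⟨hp, a * ε, by positivity, fun y hy hd => ?_⟩
  have h1 : c + a⁻¹ • (y - (a • c + b • q)) ∈ T := by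
    apply h
    · have := AffineSubspace.vadd_mem_of_mem_direction
        (Submodule.smul_mem _ a⁻¹ (AffineSubspace.vsub_mem_direction hy hp)) hca
      simpa [add_comm] using this
    · rw [dist_eq_norm] at hd ⊢
      rw [add_sub_cancel_left, norm_smul, norm_inv, Real.norm_of_nonneg ha.le,
        inv_mul_lt_iff₀ ha]
      exact hd
  have h2 := hT h1 hq ha.le hb hab
  convert h2 using 1
  rw [smul_add, smul_inv_smul₀ ha.ne']
  abel

theorem relint_mono {T P : Set (Fin N → ℝ)} (hTP : T ⊆ P)
    (h : affineSpan ℝ T = affineSpan ℝ P) :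
    intrinsicInterior ℝ T ⊆ intrinsicInterior ℝ P := by
  intro x hx
  rw [mem_relint_iff] at hx ⊢
  rw [← h]
  obtain ⟨hx, ε, hε, h'⟩ := hx
  exact ⟨hx, ε, hε, fun y hy hd => hTP (h' y hy hd)⟩

/-- A point of the relative interior can be pushed away from any point of the affine span. -/
theorem relint_extend {T : Set (Fin N → ℝ)} {c x : Fin N → ℝ}
    (hc : c ∈ intrinsicInterior ℝ T) (hx : x ∈ affineSpan ℝ T) :
    ∃ δ : ℝ, 0 < δ ∧ c + δ • (c - x) ∈ T := by
  rw [mem_relint_iff] at hc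
  obtain ⟨hca, ε, hε, h⟩ := hc
  refine ⟨ε / (‖c - x‖ + 1), by positivity, h _ ?_ ?_⟩
  · have := AffineSubspace.vadd_mem_of_mem_direction
      (Submodule.smul_mem _ (ε / (‖c - x‖ + 1)) (AffineSubspace.vsub_mem_direction hca hx)) hca
    simpa [add_comm] using this
  · rw [dist_eq_norm, add_sub_cancel_left, norm_smul, Real.norm_of_nonneg (by positivity),
      div_mul_eq_mul_div, div_lt_iff₀ (by positivity)]
    nlinarith [norm_nonneg (c - x)]

theorem massCenter_mem_hull {ν : (Fin N → ℝ) → ℝ} {M : Finset (Fin N → ℝ)}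
    (hν : ∀ x ∈ M, 0 ≤ ν x) (h : 0 < ∑ x ∈ M, ν x) :
    massCenter ν M ∈ convexHull ℝ (M : Set (Fin N → ℝ)) := by
  exact M.centerMass_mem_convexHull hν h (fun i hi => hi)

theorem massCenter_mem_relint {ν : (Fin N → ℝ) → ℝ} {M : Finset (Fin N → ℝ)}
    (hν : ∀ x ∈ M, 0 < ν x) (hM : M.Nonempty) :
    massCenter ν M ∈ intrinsicInterior ℝ (convexHull ℝ (M : Set (Fin N → ℝ))) := by
  have hconv := convex_convexHull ℝ (M : Set (Fin N → ℝ))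
  obtain ⟨z, hz⟩ := Set.Nonempty.intrinsicInterior hconv (by simpa using hM)
  obtain ⟨v, hv0, hv1, hvz⟩ := Finset.mem_convexHull'.1 (intrinsicInterior_subset hz)
  have hvle : ∀ x ∈ M, v x ≤ 1 := fun x hx => hv1 ▸ Finset.single_le_sum hv0 hx
  obtain ⟨x₀, hx₀, hmin⟩ := M.exists_min_image ν hM
  have hε : 0 < ν x₀ / 2 := half_pos (hν x₀ hx₀)
  have hW : ν x₀ ≤ ∑ x ∈ M, ν x := Finset.single_le_sum (fun x hx => (hν x hx).le) hx₀
  set W := ∑ x ∈ M, ν x with hWdef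
  set ε := ν x₀ / 2 with hεdef
  have hsum : ∑ x ∈ M, (ν x - ε * v x) = W - ε := by
    rw [Finset.sum_sub_distrib, ← Finset.mul_sum, hv1, mul_one]
  have hWε : 0 < W - ε := by linarith
  have hq : massCenter (fun x => ν x - ε * v x) M ∈ convexHull ℝ (M : Set (Fin N → ℝ)) := by
    apply massCenter_mem_hull
    · intro x hx
      have h1 := hmin x hx
      have h2 := hvle x hx
      nlinarith
    · rw [hsum]; exact hWε
  have hW0 : 0 < W := by linarith
  have := relint_comb hconv hz hq (a := ε / W) (b := (W - ε) / W) (by positivity)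
    (by positivity) (by field_simp; ring)
  convert this using 1
  unfold massCenter
  rw [hsum, smul_smul, ← hWdef]
  have e : ∑ x ∈ M, (ν x - ε * v x) • x = ∑ x ∈ M, ν x • x - ε • z := by
    simp only [sub_smul, mul_smul, Finset.sum_sub_distrib, ← Finset.smul_sum, hvz]
  have e2 : (W - ε) / W * (W - ε)⁻¹ = W⁻¹ := by field_simp
  rw [e, e2, smul_sub, smul_smul, div_eq_inv_mul]
  abel

/-- Ray shooting from a relative interior point of a compact convex set. -/
theorem exists_frontier {P : Set (Fin N → ℝ)} (hP : IsCompact P)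
    {c p : Fin N → ℝ} (hc : c ∈ intrinsicInterior ℝ P) (hp : p ∈ P) (hne : p ≠ c) :
    ∃ q ∈ intrinsicFrontier ℝ P, ∃ t : ℝ, 1 ≤ t ∧ q = c + t • (p - c) := by
  have hcP := intrinsicInterior_subset hc
  let f : ℝ → (Fin N → ℝ) := fun t => c + t • (p - c)
  have hpc : 0 < ‖p - c‖ := norm_pos_iff.2 (sub_ne_zero.2 hne)
  have hfc : Continuous f := by fun_prop
  have hK : IsCompact (f ⁻¹' P) := by
    refine Metric.isCompact_of_isClosed_isBounded (hP.isClosed.preimage hfc) ?_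
    obtain ⟨R, hR⟩ := hP.isBounded.exists_norm_le
    refine isBounded_iff_forall_norm_le.2 ⟨(R + ‖c‖) / ‖p - c‖, fun t ht => ?_⟩
    rw [le_div_iff₀ hpc, ← norm_smul]
    have h1 := hR _ ht
    have h2 : t • (p - c) = f t - c := by simp [f]
    rw [h2]
    exact (norm_sub_le _ _).trans (by linarith)
  have h1 : (1 : ℝ) ∈ f ⁻¹' P := by simpa [f] using hp
  obtain ⟨t, ht, hmax⟩ := hK.exists_isMaxOn ⟨1, h1⟩ continuousOn_id
  have ht1 : 1 ≤ t := hmax h1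
  refine ⟨f t, ?_, t, ht1, rfl⟩
  rw [← intrinsicClosure_sdiff_intrinsicInterior]
  refine ⟨subset_intrinsicClosure ht, fun hint => ?_⟩
  obtain ⟨δ, hδ, h⟩ := relint_extend hint (subset_affineSpan ℝ P hcP)
  have h3 : t + δ * t ∈ f ⁻¹' P := by
    have : f (t + δ * t) = f t + δ • (f t - c) := by
      simp only [f, add_smul, mul_smul, add_sub_cancel_left]
      abel
    rw [Set.mem_preimage, this]; exact h
  have h4 : t + δ * t ≤ t := hmax h3
  nlinarith

theorem massCenter_split {ν : (Fin N → ℝ) → ℝ} {S Δ : Finset (Fin N → ℝ)} (h : Δ ⊆ S)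
    (hS : 0 < ∑ x ∈ S \ Δ, ν x) (hc : massCenter ν (S \ Δ) ∉ Δ) :
    massCenter (fun x => if x = massCenter ν (S \ Δ) then ∑ x ∈ S \ Δ, ν x else ν x)
      (insert (massCenter ν (S \ Δ)) Δ) = massCenter ν S := by
  set c := massCenter ν (S \ Δ) with hcdef
  have e1 : ∀ x ∈ Δ, x ≠ c := fun x hx hxc => hc (hxc ▸ hx)
  have s1 : ∑ x ∈ insert c Δ, (if x = c then ∑ x ∈ S \ Δ, ν x else ν x) = ∑ x ∈ S, ν x := by
    rw [Finset.sum_insert hc, if_pos rfl, ← Finset.sum_sdiff h]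
    congr 1
    exact Finset.sum_congr rfl fun x hx => if_neg (e1 x hx)
  have s2 : ∑ x ∈ insert c Δ, (if x = c then ∑ x ∈ S \ Δ, ν x else ν x) • x
      = ∑ x ∈ S, ν x • x := by
    rw [Finset.sum_insert hc, if_pos rfl, ← Finset.sum_sdiff h]
    congr 1
    · rw [hcdef, massCenter, smul_inv_smul₀ hS.ne']
    · exact Finset.sum_congr rfl fun x hx => by rw [if_neg (e1 x hx)]
  unfold massCenter at s1 s2 ⊢
  rw [s1, s2]

end Helpers

/-- Lemma 3: let `P = conv S` with `S` the (finite) set of extreme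
points of `P`, `d ≥ 2` the dimension of `P`, positive masses `ν` on `S`, and `𝔗` a
partition of the relative boundary of `P` into `(d-1)`-dimensional simplices with vertices
in `S`.  Then the relative interior of `P` is the union over `Δ ∈ 𝔗` of the relative
interiors of `conv(Δ ∪ {c(S \ Δ)})`. -/
theorem statement11 (N : ℕ) (S : Finset (Fin N → ℝ))
    (P : Set (Fin N → ℝ)) (hP : P = convexHull ℝ (S : Set (Fin N → ℝ)))
    (hext : (S : Set (Fin N → ℝ)) = Set.extremePoints ℝ P)
    (d : ℕ) (hd2 : 2 ≤ d)
    (hdim : Module.finrank ℝ (affineSpan ℝ P).direction = d)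
    (ν : (Fin N → ℝ) → ℝ) (hν : ∀ x ∈ S, 0 < ν x)
    (𝔗 : Finset (Finset (Fin N → ℝ)))
    (h𝔗 : ∀ Δ ∈ 𝔗, Δ ⊆ S ∧ Δ.card = d ∧
      AffineIndependent ℝ (fun x : (Δ : Set (Fin N → ℝ)) => (x : Fin N → ℝ)))
    (hdisj : ∀ Δ₁ ∈ 𝔗, ∀ Δ₂ ∈ 𝔗, Δ₁ ≠ Δ₂ →
      intrinsicInterior ℝ (convexHull ℝ (Δ₁ : Set (Fin N → ℝ))) ∩
        intrinsicInterior ℝ (convexHull ℝ (Δ₂ : Set (Fin N → ℝ))) = ∅)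
    (hcover : (⋃ Δ ∈ 𝔗, convexHull ℝ (Δ : Set (Fin N → ℝ))) = intrinsicFrontier ℝ P) :
    intrinsicInterior ℝ P =
      ⋃ Δ ∈ 𝔗, intrinsicInterior ℝ
        (convexHull ℝ ((Δ : Set (Fin N → ℝ)) ∪ {massCenter ν (S \ Δ)})) := by
  classical
  have hPc : IsCompact P := by
    rw [hP]; exact S.finite_toSet.isCompact_convexHull (𝕜 := ℝ)
  have hconv : Convex ℝ P := by rw [hP]; exact convex_convexHull _ _
  have hspan : affineSpan ℝ P = affineSpan ℝ (S : Set (Fin N → ℝ)) := by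
    rw [hP, affineSpan_convexHull]
  have hSne : S.Nonempty := by
    rw [Finset.nonempty_iff_ne_empty]
    rintro rfl
    rw [hspan] at hdim
    rw [direction_affineSpan, Finset.coe_empty, vectorSpan_empty, finrank_bot] at hdim
    omega
  have hcP : massCenter ν S ∈ intrinsicInterior ℝ P := by
    rw [hP]; exact massCenter_mem_relint hν hSne
  have key : ∀ Δ ∈ 𝔗,
      convexHull ℝ ((Δ : Set (Fin N → ℝ)) ∪ {massCenter ν (S \ Δ)}) ⊆ P ∧
      affineSpan ℝ (convexHull ℝ ((Δ : Set (Fin N → ℝ)) ∪ {massCenter ν (S \ Δ)})) =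
        affineSpan ℝ P ∧
      massCenter ν S ∈ intrinsicInterior ℝ
        (convexHull ℝ ((Δ : Set (Fin N → ℝ)) ∪ {massCenter ν (S \ Δ)})) := by
    intro Δ hΔ
    obtain ⟨hΔS, hcard, hind⟩ := h𝔗 Δ hΔ
    have hΔne : Δ.Nonempty := by rw [← Finset.card_pos]; omega
    have hrank : Module.finrank ℝ (affineSpan ℝ (Δ : Set (Fin N → ℝ))).direction = d - 1 := by
      have := hind.finrank_vectorSpan (n := d - 1) (by simp; omega)
      rw [direction_affineSpan]
      have hr : Set.range (fun x : (Δ : Set (Fin N → ℝ)) => (x : Fin N → ℝ)) = Δ :=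
        Subtype.range_coe
      rw [hr] at this
      exact this
    have hΔfr : convexHull ℝ (Δ : Set (Fin N → ℝ)) ⊆ intrinsicFrontier ℝ P := by
      rw [← hcover]
      exact Set.subset_biUnion_of_mem (u := fun Δ : Finset (Fin N → ℝ) =>
        convexHull ℝ (Δ : Set (Fin N → ℝ))) hΔ
    have hΔP : convexHull ℝ (Δ : Set (Fin N → ℝ)) ⊆ P := by
      rw [hP]; exact convexHull_mono (by exact_mod_cast hΔS)
    have hne : (S \ Δ).Nonempty := by
      rw [Finset.sdiff_nonempty]
      intro hSΔ
      have : S = Δ := hSΔ.antisymm hΔS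
      rw [hspan, this, hrank] at hdim
      omega
    have hνd : ∀ x ∈ S \ Δ, 0 < ν x := fun x hx => hν x (Finset.mem_sdiff.1 hx).1
    have hWd : 0 < ∑ x ∈ S \ Δ, ν x := Finset.sum_pos hνd hne
    -- the mass center of `S` is not in the affine span of `Δ`
    have hnot : massCenter ν S ∉ affineSpan ℝ (Δ : Set (Fin N → ℝ)) := by
      intro hmem
      have hm := massCenter_mem_relint (fun x hx => hν x (hΔS hx)) hΔne
      obtain ⟨δ, hδ, h⟩ := relint_extend hm (x := massCenter ν S)
        (by rw [affineSpan_convexHull]; exact hmem)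
      have hfr := hΔfr (intrinsicInterior_subset hm)
      rw [← intrinsicClosure_sdiff_intrinsicInterior] at hfr
      apply hfr.2
      have := relint_comb hconv hcP (hΔP h) (a := δ / (1 + δ)) (b := 1 / (1 + δ))
        (by positivity) (by positivity) (by field_simp; ring)
      convert this using 1
      ext i
      simp only [Pi.add_apply, Pi.smul_apply, Pi.sub_apply, smul_eq_mul]
      field_simp
      ring
    have hcnot : massCenter ν (S \ Δ) ∉ affineSpan ℝ (Δ : Set (Fin N → ℝ)) := by
      intro hmem
      have hcd : massCenter ν S ∈ affineSpan ℝ (Δ : Set (Fin N → ℝ)) := by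
        have hm := convexHull_subset_affineSpan (𝕜 := ℝ) _
          (intrinsicInterior_subset (massCenter_mem_relint (fun x hx => hν x (hΔS hx)) hΔne))
        have hWΔ : 0 < ∑ x ∈ Δ, ν x := Finset.sum_pos (fun x hx => hν x (hΔS hx)) hΔne
        have hsum := Finset.sum_sdiff (f := ν) hΔS
        have hsum2 := Finset.sum_sdiff (f := fun x => ν x • x) hΔS
        set A := ∑ x ∈ S \ Δ, ν x with hA
        set B := ∑ x ∈ Δ, ν x with hB
        have := (affineSpan ℝ (Δ : Set (Fin N → ℝ))).convex hmem hm
          (a := A / (A + B)) (b := B / (A + B)) (by positivity) (by positivity)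
          (by field_simp)
        rw [SetLike.mem_coe] at this
        convert this using 1
        unfold massCenter
        rw [← hsum, ← hsum2, ← hA, ← hB, smul_smul, smul_smul, smul_add]
        congr 2 <;> field_simp
      exact hnot hcd
    have hcnot' : massCenter ν (S \ Δ) ∉ Δ := fun h =>
      hcnot (subset_affineSpan ℝ _ (by exact_mod_cast h))
    have hset : ((Δ : Set (Fin N → ℝ)) ∪ {massCenter ν (S \ Δ)}) =
        ((insert (massCenter ν (S \ Δ)) Δ : Finset (Fin N → ℝ)) : Set (Fin N → ℝ)) := by
      rw [Finset.coe_insert, Set.union_singleton]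
    have hsub : convexHull ℝ ((Δ : Set (Fin N → ℝ)) ∪ {massCenter ν (S \ Δ)}) ⊆ P := by
      refine convexHull_min (Set.union_subset ((subset_convexHull ℝ _).trans hΔP) ?_) hconv
      rw [Set.singleton_subset_iff, hP]
      exact convexHull_mono (by simp) (massCenter_mem_hull (fun x hx => (hνd x hx).le) hWd)
    refine ⟨hsub, ?_, ?_⟩
    · have hle := affineSpan_mono ℝ hsub
      have hlt : affineSpan ℝ (Δ : Set (Fin N → ℝ)) < affineSpan ℝ
          (convexHull ℝ ((Δ : Set (Fin N → ℝ)) ∪ {massCenter ν (S \ Δ)})) := by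
        rw [affineSpan_convexHull]
        refine lt_of_le_of_ne (affineSpan_mono ℝ Set.subset_union_left) fun he => hcnot ?_
        rw [he]
        exact subset_affineSpan ℝ _ (by simp)
      have hdlt := AffineSubspace.direction_lt_of_nonempty hlt
        ((affineSpan_nonempty ℝ).2 (by simpa using hΔne))
      have hfr := Submodule.finrank_lt_finrank_of_lt hdlt
      refine AffineSubspace.eq_of_direction_eq_of_nonempty_of_le ?_
        ((affineSpan_nonempty ℝ).2 (by simp)) hle
      refine Submodule.eq_of_le_of_finrank_le (AffineSubspace.direction_le hle) ?_
      omega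
    · rw [hset, ← massCenter_split hΔS hWd hcnot']
      refine massCenter_mem_relint (fun x hx => ?_) (Finset.insert_nonempty _ _)
      split_ifs with h
      · exact hWd
      · exact hν x (hΔS ((Finset.mem_insert.1 hx).resolve_left h))
  have ray : ∀ p ∈ P, p ≠ massCenter ν S → ∃ Δ ∈ 𝔗, ∃ q ∈ convexHull ℝ (Δ : Set (Fin N → ℝ)),
      q ∈ intrinsicFrontier ℝ P ∧ ∃ t : ℝ, 1 ≤ t ∧
        q = massCenter ν S + t • (p - massCenter ν S) := by
    intro p hp hne
    obtain ⟨q, hq, t, ht, hqt⟩ := exists_frontier hPc hcP hp hne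
    have hq' := hq
    rw [← hcover] at hq'
    simp only [Set.mem_iUnion] at hq'
    obtain ⟨Δ, hΔ, hqΔ⟩ := hq'
    exact ⟨Δ, hΔ, q, hqΔ, hq, t, ht, hqt⟩
  apply Set.Subset.antisymm
  · intro p hp
    simp only [Set.mem_iUnion]
    by_cases hpc : p = massCenter ν S
    · obtain ⟨p', hp', hne⟩ : ∃ p' ∈ P, p' ≠ massCenter ν S := by
        by_contra! hall
        have : P = {massCenter ν S} := by
          apply Set.Subset.antisymm
          · intro x hx; exact hall x hx
          · rw [Set.singleton_subset_iff]; exact intrinsicInterior_subset hcP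
        rw [direction_affineSpan, this, vectorSpan_singleton, finrank_bot] at hdim
        omega
      obtain ⟨Δ, hΔ, -⟩ := ray p' hp' hne
      exact ⟨Δ, hΔ, hpc ▸ (key Δ hΔ).2.2⟩
    · obtain ⟨Δ, hΔ, q, hq, hqf, t, ht, hqt⟩ := ray p (intrinsicInterior_subset hp) hpc
      refine ⟨Δ, hΔ, ?_⟩
      have ht' : t ≠ 1 := by
        rintro rfl
        rw [one_smul, add_sub_cancel] at hqt
        rw [← intrinsicClosure_sdiff_intrinsicInterior] at hqf
        exact hqf.2 (hqt ▸ hp)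
      have ht1 : 1 < t := lt_of_le_of_ne ht ht'.symm
      have h0 : 0 < t := by linarith
      have h01 : 0 < t - 1 := by linarith
      have := relint_comb (convex_convexHull ℝ _) (key Δ hΔ).2.2
        (convexHull_mono Set.subset_union_left hq) (a := (t - 1) / t) (b := 1 / t)
        (by positivity) (by positivity) (by field_simp; ring)
      convert this using 1
      rw [hqt]
      ext i
      simp only [Pi.add_apply, Pi.smul_apply, Pi.sub_apply, smul_eq_mul]
      field_simp
      ring
  · refine Set.iUnion₂_subset fun Δ hΔ => ?_
    exact relint_mono (key Δ hΔ).1 (key Δ hΔ).2.1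
end
end
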